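/- arXiv:1710.11234 — 5 statements merged into one kernel-verified Lean document; each statement's English description precedes it below -/
import Mathlib

section
/- Let n ≥ 1 and let u, v ∈ ℝ^{2n} be linearly independent vectors such that the 2-dimensional subspace Span_ℝ(u, v) of ℝ^{2n} is rational, i.e. admits a basis consisting of vectors with rational coordinates. Then the additive subgroup of ℝ² generated by the 2n column vectors (u_k, v_k) ∈ ℝ², k = 1, …, 2n, is a discrete subgroup of ℝ², free abelian of rank 2 (isomorphic to ℤ²). -/
/-!
Let `x₁, …, x_m` be the columns, in a real vector space `E` with basis `b`. Evaluation at the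
columns maps the dual of `E` to `ℝᵐ`; it sends the `j`-th coordinate functional to the `j`-th row,
so it is injective (the rows are independent) and its image is the span of the rows. As this span
is generated by rational vectors, the dual of `E` is generated by functionals taking rational values
at the columns and, after clearing denominators, by functionals which are integral on the group
`L` generated by the columns. A basis of such functionals is dual to a basis of `E` whose integral
span contains `L`, so `L` is discrete. Injectivity also says that no nonzero functional kills every
column, i.e. that the columns span `E`; hence `L` is a full lattice.
-/

open Module Submodule

section EvalAt

variable {R E ι : Type*} [CommRing R] [AddCommGroup E] [Module R E]

/-- Evaluation of linear functionals at a family `x` of vectors. If `x` is the family of columns of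
a matrix, its range is the row space. -/
def evalAt (x : ι → E) : Dual R E →ₗ[R] (ι → R) :=
  LinearMap.pi fun k => Dual.eval R E (x k)

@[simp]
theorem evalAt_apply (x : ι → E) (f : Dual R E) (k : ι) : evalAt x f k = f (x k) :=
  rfl

variable {κ : Type*} [Fintype κ] (b : Basis κ R E) (w : κ → ι → R)

theorem evalAt_columns_comp_constr :
    evalAt (fun k => ∑ j, w j k • b j) ∘ₗ (b.constr R).toLinearMap =
      Fintype.linearCombination R w := by
  refine LinearMap.ext fun c => ?_
  ext
  simp only [LinearMap.comp_apply, LinearEquiv.coe_coe, evalAt_apply, map_sum, map_smul,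
    Basis.constr_basis, Fintype.linearCombination_apply, Finset.sum_apply, Pi.smul_apply,
    smul_eq_mul, mul_comm]

theorem range_evalAt_columns :
    LinearMap.range (evalAt fun k => ∑ j, w j k • b j) = span R (Set.range w) := by
  rw [← Fintype.range_linearCombination, ← evalAt_columns_comp_constr b, LinearEquiv.range_comp]

theorem injective_evalAt_columns {w : κ → ι → R} (hw : LinearIndependent R w) :
    Function.Injective (evalAt (R := R) fun k => ∑ j, w j k • b j) := by
  rw [linearIndependent_iff_injective_fintypeLinearCombination,
    ← evalAt_columns_comp_constr b] at hw
  exact (b.constr R).toEquiv.injective_comp _ |>.1 hw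

end EvalAt

theorem span_range_eq_top_of_injective_evalAt {K E ι : Type*} [Field K] [AddCommGroup E]
    [Module K E] {x : ι → E} (hx : Function.Injective (evalAt (R := K) x)) :
    span K (Set.range x) = ⊤ := by
  by_contra hne
  obtain ⟨f, hf, hker⟩ := exists_le_ker_of_lt_top _ (lt_top_iff_ne_top.2 hne)
  refine hf (hx ?_)
  ext k
  simpa using hker (subset_span (Set.mem_range_self k))

theorem exists_basis_coord_eq {R E κ : Type*} [CommRing R] [AddCommGroup E] [Module R E]
    [IsReflexive R E] [Finite κ] (φ : Basis κ R (Dual R E)) :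
    ∃ e : Basis κ R E, ∀ i, e.coord i = φ i := by
  classical
  refine ⟨φ.dualBasis.map (evalEquiv R E).symm, fun i => ?_⟩
  ext y
  simp

section IntegralDual

variable {E ι : Type*} [AddCommGroup E] [Module ℝ E]

/-- The real functionals with integer values on `L`; for a full lattice `L` this is the dual
lattice. Being integral is expressed as membership in `1 : Submodule ℤ ℝ`, the image of `ℤ`. -/
def integralDual (L : Submodule ℤ E) : Set (Dual ℝ E) :=
  {f | ∀ x ∈ L, f x ∈ (1 : Submodule ℤ ℝ)}

/-- A subspace of `ℝ^ι` is rational if it is spanned by vectors with rational coordinates. -/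
def IsRationalSubspace (W : Submodule ℝ (ι → ℝ)) : Prop :=
  ∃ s : Set (ι → ℚ), W = span ℝ ((fun r k => (r k : ℝ)) '' s)

theorem mem_integralDual_span {s : Set E} {f : Dual ℝ E} :
    f ∈ integralDual (span ℤ s) ↔ ∀ x ∈ s, f x ∈ (1 : Submodule ℤ ℝ) :=
  span_le (p := (1 : Submodule ℤ ℝ).comap (f.restrictScalars ℤ))

theorem mem_span_integralDual_of_rational_values [Finite ι]
    {x : ι → E} {f : Dual ℝ E} {r : ι → ℚ} (hf : ∀ k, f (x k) = r k) :
    f ∈ span ℝ (integralDual (span ℤ (Set.range x))) := by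
  obtain ⟨N, hN⟩ := IsLocalization.exist_integer_multiples_of_finite (nonZeroDivisors ℤ) r
  have hN0 : ((N : ℤ) : ℝ) ≠ 0 := Int.cast_ne_zero.2 (nonZeroDivisors.coe_ne_zero N)
  have hNf : ((N : ℤ) : ℝ) • f ∈ integralDual (span ℤ (Set.range x)) := by
    rw [mem_integralDual_span, Set.forall_mem_range]
    intro k
    obtain ⟨z, hz⟩ := hN k
    refine mem_one.2 ⟨z, ?_⟩
    simpa [hf] using congrArg (Rat.cast : ℚ → ℝ) hz
  exact (smul_mem_iff _ hN0).1 (subset_span hNf)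

theorem span_integralDual_eq_top [Finite ι] {x : ι → E}
    (hx : Function.Injective (evalAt (R := ℝ) x))
    (hrat : IsRationalSubspace (LinearMap.range (evalAt (R := ℝ) x))) :
    span ℝ (integralDual (span ℤ (Set.range x))) = ⊤ := by
  obtain ⟨s, hs⟩ := hrat
  have hle : LinearMap.range (evalAt (R := ℝ) x) ≤
      (span ℝ (integralDual (span ℤ (Set.range x)))).map (evalAt x) := by
    rw [hs, span_le, Set.image_subset_iff]
    intro r hr
    have hmem : (fun k => (r k : ℝ)) ∈ LinearMap.range (evalAt (R := ℝ) x) :=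
      hs ▸ subset_span (Set.mem_image_of_mem _ hr)
    obtain ⟨f, hf⟩ := hmem
    exact ⟨f, mem_span_integralDual_of_rational_values (congrFun hf), hf⟩
  rwa [← Submodule.map_top, map_le_map_iff_of_injective hx, top_le_iff] at hle

end IntegralDual

section Lattice

variable {E : Type*} [NormedAddCommGroup E] [NormedSpace ℝ E]

theorem discreteTopology_of_span_integralDual_eq_top [FiniteDimensional ℝ E]
    {L : Submodule ℤ E} (hL : span ℝ (integralDual L) = ⊤) : DiscreteTopology L := by
  let φ := Basis.ofSpan hL.ge
  have hφ : ∀ i, φ i ∈ integralDual L := fun i => Basis.ofSpan_subset hL.ge ⟨i, rfl⟩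
  have := Module.Finite.finite_basis φ
  obtain ⟨e, he⟩ := exists_basis_coord_eq φ
  have hle : L ≤ span ℤ (Set.range e) := fun y hy =>
    (e.mem_span_iff_repr_mem ℤ y).2 fun i =>
      mem_one.1 (e.coord_apply i y ▸ he i ▸ hφ i y hy)
  have hdiscrete : DiscreteTopology (span ℤ (Set.range e)) := inferInstance
  exact DiscreteTopology.of_subset hdiscrete hle

theorem nonempty_linearEquiv_of_isZLattice {κ : Type*} [Finite κ] (b : Basis κ ℝ E)
    (L : Submodule ℤ E) [DiscreteTopology L] [IsZLattice ℝ L] : Nonempty (L ≃ₗ[ℤ] (κ → ℤ)) := by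
  have := Fintype.ofFinite κ
  have := b.finiteDimensional_of_finite
  have := ZLattice.module_free ℝ L
  have := ZLattice.module_finite ℝ L
  refine ⟨LinearEquiv.ofFinrankEq _ _ ?_⟩
  rw [ZLattice.rank ℝ L, finrank_eq_card_basis b, finrank_fintype_fun_eq_card]

end Lattice

theorem columns_discrete_of_rational_span_general {E ι κ : Type*} [NormedAddCommGroup E]
    [NormedSpace ℝ E] [Finite ι] [Fintype κ] (b : Basis κ ℝ E) {w : κ → ι → ℝ}
    (hind : LinearIndependent ℝ w) (hrat : IsRationalSubspace (span ℝ (Set.range w))) :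
    DiscreteTopology (AddSubgroup.closure (Set.range fun k => ∑ j, w j k • b j)) ∧
      Nonempty (AddSubgroup.closure (Set.range fun k => ∑ j, w j k • b j) ≃+ (κ → ℤ)) := by
  have := b.finiteDimensional_of_finite
  rw [← span_int_eq_addSubgroupClosure]
  set L := span ℤ (Set.range fun k => ∑ j, w j k • b j)
  have hinj := injective_evalAt_columns b hind
  have hdiscrete : DiscreteTopology L := discreteTopology_of_span_integralDual_eq_top <|
    span_integralDual_eq_top hinj (range_evalAt_columns b w ▸ hrat)
  have hlattice : IsZLattice ℝ L :=
    ⟨by rw [span_span_of_tower, span_range_eq_top_of_injective_evalAt hinj]⟩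
  exact ⟨hdiscrete, (nonempty_linearEquiv_of_isZLattice b L).map LinearEquiv.toAddEquiv⟩

/-- If `u, v ∈ ℝ^{2n}` are linearly independent and span a rational
2-dimensional subspace, then the additive subgroup of `ℝ²` generated by the `2n`
columns `(u_k, v_k)` is discrete and free abelian of rank 2 (isomorphic to `ℤ²`). -/
theorem columns_discrete_of_rational_span (n : ℕ) (hn : 1 ≤ n)
    (u v : Fin (2 * n) → ℝ)
    (hind : LinearIndependent ℝ ![u, v])
    (hrat : ∃ p q : Fin (2 * n) → ℚ,
      Submodule.span ℝ ({u, v} : Set (Fin (2 * n) → ℝ)) =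
        Submodule.span ℝ
          ({fun k => ((p k : ℝ)), fun k => ((q k : ℝ))} : Set (Fin (2 * n) → ℝ))) :
    DiscreteTopology
      ↥(AddSubgroup.closure (Set.range fun k : Fin (2 * n) => ((u k, v k) : ℝ × ℝ))) ∧
    Nonempty
      (↥(AddSubgroup.closure (Set.range fun k : Fin (2 * n) => ((u k, v k) : ℝ × ℝ)))
        ≃+ ℤ × ℤ) := by
  obtain ⟨p, q, hpq⟩ := hrat
  have hrat' : IsRationalSubspace (span ℝ (Set.range ![u, v])) :=
    ⟨{p, q}, by rw [Matrix.range_cons_cons_empty, hpq, Set.image_pair]⟩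
  have hcolumns : (fun k => ∑ j, ![u, v] j k • Basis.finTwoProd ℝ j) = fun k => (u k, v k) := by
    ext k <;> simp
  rw [← hcolumns]
  exact (columns_discrete_of_rational_span_general (Basis.finTwoProd ℝ) hind hrat').imp_right
    (·.map (·.trans (LinearEquiv.finTwoArrow ℤ ℤ).toAddEquiv))
end

section
/- Let n ≥ 1 and let u ∈ ℝ^{2n} be a nonzero vector. Then there exists γ ∈ Sp(2n, ℤ) such that every coordinate of γu is nonzero. -/
def idx1 (n : ℕ) (j : Fin n) : Fin (2 * n) :=
  ⟨2 * j.val, by have := j.isLt; omega⟩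

def idx2 (n : ℕ) (j : Fin n) : Fin (2 * n) :=
  ⟨2 * j.val + 1, by have := j.isLt; omega⟩

def omegaJ {R : Type*} [CommRing R] (n : ℕ) (j : Fin n) (u v : Fin (2 * n) → R) : R :=
  u (idx1 n j) * v (idx2 n j) - u (idx2 n j) * v (idx1 n j)

def omegaForm {R : Type*} [CommRing R] (n : ℕ) (u v : Fin (2 * n) → R) : R :=
  ∑ j : Fin n, omegaJ n j u v

def IsSymplectic {R : Type*} [CommRing R] (n : ℕ)
    (g : Matrix (Fin (2 * n)) (Fin (2 * n)) R) : Prop :=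
  ∀ x y : Fin (2 * n) → R, omegaForm n (g.mulVec x) (g.mulVec y) = omegaForm n x y

/-!
Pick an integer vector `v` with no zero coordinate and `ω(v, u) ≠ 0`; it exists because `ω` is
nondegenerate and the integer vectors with no zero coordinate generate `ℤ^{2n}`. For `m ∈ ℤ` the
transvection `x ↦ x + m ω(v, x) v` is an integral symplectic map, and it sends `u` to a vector whose
`k`-th coordinate `u k + m ω(v, u) v k` vanishes for at most one `m`. Hence all but finitely many
`m` work.
-/

theorem exists_forall_ne_zero_and_map_ne_zero {ι G A : Type*} [AddGroup G] [Infinite G]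
    [AddGroup A] (φ : (ι → G) →+ A) (hφ : φ ≠ 0) :
    ∃ v : ι → G, (∀ i, v i ≠ 0) ∧ φ v ≠ 0 := by
  classical
  by_contra! hvanish
  refine hφ (AddMonoidHom.ext fun w => ?_)
  -- Write `w` as the difference of `w + v` and `v`, neither of which has a zero coordinate.
  choose v hv using fun i => Infinite.exists_notMem_finset {0, -w i}
  simp only [Finset.mem_insert, Finset.mem_singleton, not_or] at hv
  have hφv : φ v = 0 := hvanish v fun i => (hv i).1
  have hφwv : φ (w + v) = 0 :=
    hvanish (w + v) fun i hi => (hv i).2 (eq_neg_of_add_eq_zero_right hi)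
  simpa [hφv] using hφwv

theorem exists_forall_add_zsmul_ne_zero {ι A : Type*} [Finite ι] [AddGroup A]
    [IsAddTorsionFree A] (u w : ι → A) (hw : ∀ i, w i ≠ 0) :
    ∃ m : ℤ, ∀ i, u i + m • w i ≠ 0 := by
  have hfinite : (⋃ i, {m : ℤ | u i + m • w i = 0}).Finite := by
    refine Set.finite_iUnion fun i => Set.Subsingleton.finite fun m hm m' hm' => ?_
    have hsmul : m • w i = m' • w i := add_left_cancel (hm.trans hm'.symm)
    have hsub : (m - m') • w i = 0 := by rw [sub_zsmul, hsmul, add_neg_cancel]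
    exact sub_eq_zero.1 ((IsAddTorsionFree.zsmul_eq_zero_iff_left (hw i)).1 hsub)
  obtain ⟨m, hm⟩ := hfinite.exists_notMem
  exact ⟨m, fun i hi => hm (Set.mem_iUnion.2 ⟨i, hi⟩)⟩

theorem apply_transvection_transvection_of_isAlt {R M : Type*} [CommRing R] [AddCommGroup M]
    [Module R M] {B : LinearMap.BilinForm R M} (hB : B.IsAlt) (c : R) (v x y : M) :
    B (LinearMap.transvection (c • B v) v x) (LinearMap.transvection (c • B v) v y) = B x y := by
  simp only [LinearMap.transvection.apply, LinearMap.smul_apply, map_add, map_smul,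
    LinearMap.add_apply, smul_eq_mul, hB.self_eq_zero, ← hB.neg_eq v x]
  ring

theorem comp_single_one {ι R S : Type*} [DecidableEq ι] [NonAssocSemiring R]
    [NonAssocSemiring S] (f : R →+* S) (i : ι) : f ∘ Pi.single i 1 = Pi.single i 1 := by
  ext j
  simp [Pi.single_apply, apply_ite f]

theorem exists_eq_idx1_or_eq_idx2 {n : ℕ} (k : Fin (2 * n)) :
    ∃ j : Fin n, k = idx1 n j ∨ k = idx2 n j :=
  ⟨⟨k / 2, by omega⟩, by simp only [idx1, idx2, Fin.ext_iff]; omega⟩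

section omegaForm

variable {R S : Type*} [CommRing R] [CommRing S] (n : ℕ)

theorem omegaForm_single_idx1 (j : Fin n) (u : Fin (2 * n) → R) :
    omegaForm n (Pi.single (idx1 n j) 1) u = u (idx2 n j) := by
  have hne (i : Fin n) : idx2 n i ≠ idx1 n j := by simp only [idx1, idx2, ne_eq, Fin.ext_iff]; omega
  have hiff (i : Fin n) : idx1 n i = idx1 n j ↔ i = j := by simp [idx1, Fin.ext_iff]
  simp [omegaForm, omegaJ, Pi.single_apply, hne, hiff]

theorem omegaForm_single_idx2 (j : Fin n) (u : Fin (2 * n) → R) :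
    omegaForm n (Pi.single (idx2 n j) 1) u = -u (idx1 n j) := by
  have hne (i : Fin n) : idx1 n i ≠ idx2 n j := by simp only [idx1, idx2, ne_eq, Fin.ext_iff]; omega
  have hiff (i : Fin n) : idx2 n i = idx2 n j ↔ i = j := by simp [idx2, Fin.ext_iff]
  simp [omegaForm, omegaJ, Pi.single_apply, hne, hiff]

theorem exists_omegaForm_single_ne_zero {u : Fin (2 * n) → R} (hu : u ≠ 0) :
    ∃ k, omegaForm n (Pi.single k 1) u ≠ 0 := by
  obtain ⟨k, hk⟩ := Function.ne_iff.1 hu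
  obtain ⟨j, rfl | rfl⟩ := exists_eq_idx1_or_eq_idx2 k
  · exact ⟨idx2 n j, by simpa [omegaForm_single_idx2] using hk⟩
  · exact ⟨idx1 n j, by simpa [omegaForm_single_idx1] using hk⟩

theorem map_omegaForm (f : R →+* S) (x y : Fin (2 * n) → R) :
    f (omegaForm n x y) = omegaForm n (f ∘ x) (f ∘ y) := by
  simp [omegaForm, omegaJ]

/-- The standard symplectic form `omegaForm` bundled as a bilinear form. -/
def omegaBilin : LinearMap.BilinForm R (Fin (2 * n) → R) :=
  ∑ j : Fin n,
    ((LinearMap.mul R R).compl₁₂ (LinearMap.proj (idx1 n j)) (LinearMap.proj (idx2 n j)) -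
      (LinearMap.mul R R).compl₁₂ (LinearMap.proj (idx2 n j)) (LinearMap.proj (idx1 n j)))

@[simp]
theorem omegaBilin_apply (x y : Fin (2 * n) → R) : omegaBilin n x y = omegaForm n x y := by
  simp [omegaBilin, omegaForm, omegaJ]

theorem omegaBilin_isAlt : (omegaBilin n : LinearMap.BilinForm R (Fin (2 * n) → R)).IsAlt :=
  fun x => by simp [omegaForm, omegaJ, mul_comm]

/-- The matrix of the symplectic transvection `x ↦ x + c ω(v, x) v`. -/
def symplecticTransvection (c : R) (v : Fin (2 * n) → R) :
    Matrix (Fin (2 * n)) (Fin (2 * n)) R :=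
  LinearMap.toMatrix' (LinearMap.transvection (c • omegaBilin n v) v)

theorem symplecticTransvection_mulVec (c : R) (v x : Fin (2 * n) → R) :
    (symplecticTransvection n c v).mulVec x = x + (c * omegaForm n v x) • v := by
  simp [symplecticTransvection, LinearMap.toMatrix'_mulVec, LinearMap.transvection.apply]

theorem isSymplectic_symplecticTransvection (c : R) (v : Fin (2 * n) → R) :
    IsSymplectic n (symplecticTransvection n c v) := fun x y => by
  simpa only [symplecticTransvection, LinearMap.toMatrix'_mulVec, omegaBilin_apply] using
    apply_transvection_transvection_of_isAlt (omegaBilin_isAlt n) c v x y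

theorem symplecticTransvection_map (f : R →+* S) (c : R) (v : Fin (2 * n) → R) :
    (symplecticTransvection n c v).map f = symplecticTransvection n (f c) (f ∘ v) := by
  ext i k
  simp [symplecticTransvection, LinearMap.toMatrix'_apply, LinearMap.transvection.apply,
    map_omegaForm, ← comp_single_one f]

theorem exists_int_forall_ne_zero_and_omegaForm_ne_zero {u : Fin (2 * n) → R} (hu : u ≠ 0) :
    ∃ v : Fin (2 * n) → ℤ, (∀ k, v k ≠ 0) ∧ omegaForm n (Int.castRingHom R ∘ v) u ≠ 0 := by
  let φ : (Fin (2 * n) → ℤ) →+ R :=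
    ((omegaBilin n).flip u).toAddMonoidHom.comp ((Int.castAddHom R).compLeft (Fin (2 * n)))
  have hφ (v : Fin (2 * n) → ℤ) : φ v = omegaForm n (Int.castRingHom R ∘ v) u :=
    omegaBilin_apply n _ u
  have hφ_ne_zero : φ ≠ 0 := by
    obtain ⟨k, hk⟩ := exists_omegaForm_single_ne_zero n hu
    refine fun h => hk ?_
    rw [← comp_single_one (Int.castRingHom R), ← hφ, h, AddMonoidHom.zero_apply]
  simpa only [hφ] using exists_forall_ne_zero_and_map_ne_zero φ hφ_ne_zero

end omegaForm

theorem exists_integer_symplectic_all_coords_nonzero_general {R : Type*} [CommRing R]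
    [IsAddTorsionFree R] (n : ℕ) (u : Fin (2 * n) → R) (hu : u ≠ 0) :
    ∃ γ : Matrix (Fin (2 * n)) (Fin (2 * n)) ℤ,
      IsSymplectic n (γ.map (Int.cast : ℤ → R)) ∧
      ∀ k : Fin (2 * n), (γ.map (Int.cast : ℤ → R)).mulVec u k ≠ 0 := by
  obtain ⟨v, hv, hvu⟩ := exists_int_forall_ne_zero_and_omegaForm_ne_zero n hu
  set w : Fin (2 * n) → R := Int.castRingHom R ∘ v
  obtain ⟨m, hm⟩ := exists_forall_add_zsmul_ne_zero u (fun k => v k • omegaForm n w u)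
    fun k => smul_ne_zero (hv k) hvu
  have hmap : (symplecticTransvection n m v).map (Int.cast : ℤ → R) =
      symplecticTransvection n (m : R) w := symplecticTransvection_map n (Int.castRingHom R) m v
  refine ⟨symplecticTransvection n m v, ?_, fun k => ?_⟩
  · rw [hmap]
    exact isSymplectic_symplecticTransvection n (m : R) w
  · have hcoord : (symplecticTransvection n (m : R) w).mulVec u k =
        u k + m • v k • omegaForm n w u := by
      have hw : w k = v k := rfl
      simp only [symplecticTransvection_mulVec, Pi.add_apply, Pi.smul_apply, smul_eq_mul,
        zsmul_eq_mul, hw]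
      ring
    rw [hmap, hcoord]
    exact hm k

/-- For every nonzero `u ∈ ℝ^{2n}` there is `γ ∈ Sp(2n, ℤ)` such that
every coordinate of `γu` is nonzero. -/
theorem exists_integer_symplectic_all_coords_nonzero (n : ℕ) (hn : 1 ≤ n)
    (u : Fin (2 * n) → ℝ) (hu : u ≠ 0) :
    ∃ γ : Matrix (Fin (2 * n)) (Fin (2 * n)) ℤ,
      IsSymplectic n (γ.map (Int.cast : ℤ → ℝ)) ∧
      ∀ k : Fin (2 * n), (γ.map (Int.cast : ℤ → ℝ)).mulVec u k ≠ 0 :=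
  exists_integer_symplectic_all_coords_nonzero_general n u hu
end

section
/- Let n ≥ 2 and let CH ⊂ GL(2n, ℝ) be the closed subgroup consisting of all block matrices g(t, x, y, z) = [[t, x, z], [0, I_{2n−2}, y], [0, 0, t⁻¹]], where t > 0 is a real number, x is a real row vector of length 2n−2, y is a real column vector of length 2n−2, z ∈ ℝ, and I_{2n−2} is the identity block. Then CH contains no lattice: for every discrete subgroup Δ of CH and every measurable fundamental domain D ⊆ CH for the action of Δ on CH by left translations, D has infinite measure with respect to a (left) Haar measure on CH. -/
open MeasureTheory

/-- The Borel (product) measurable structure on real matrices. -/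
instance matrixMeasurableSpace (m k : ℕ) : MeasurableSpace (Matrix (Fin m) (Fin k) ℝ) :=
  (inferInstance : MeasurableSpace (Fin m → Fin k → ℝ))

/-- The block matrix `g(t, x, y, z) = [[t, x, z], [0, I_{2n−2}, y], [0, 0, t⁻¹]]`
(`t` in position `(0,0)`, `t⁻¹` in position `(2n−1, 2n−1)`, `x` the rest of the first
row, `y` the rest of the last column, `z` the corner entry `(0, 2n−1)`, and the
identity block `I_{2n−2}` in the middle). -/
noncomputable def chMat (n : ℕ) (t : ℝ) (x y : Fin (2 * n - 2) → ℝ) (z : ℝ) :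
    Matrix (Fin (2 * n)) (Fin (2 * n)) ℝ := fun i j =>
  if hi0 : i.val = 0 then
    if hj0 : j.val = 0 then t
    else if hjl : j.val = 2 * n - 1 then z
    else x ⟨j.val - 1, by have := j.isLt; omega⟩
  else if hil : i.val = 2 * n - 1 then
    if j.val = 2 * n - 1 then t⁻¹ else 0
  else
    if hjl : j.val = 2 * n - 1 then y ⟨i.val - 1, by have := i.isLt; omega⟩
    else if i = j then (1 : ℝ) else 0

/-- The group `CH = H_{2n−1} ⋊ ℝ₊`, realized as the set of all block matrices
`g(t, x, y, z)` with `t > 0`. -/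
def chSet (n : ℕ) : Set (Matrix (Fin (2 * n)) (Fin (2 * n)) ℝ) :=
  {g | ∃ t : ℝ, 0 < t ∧ ∃ x y : Fin (2 * n - 2) → ℝ, ∃ z : ℝ, g = chMat n t x y z}

/-!
Right translations commute with the left action of `Γ`, so they carry a fundamental domain to a
fundamental domain of the same measure, while multiplying every measure by a value of the modular
character. A fundamental domain of finite measure therefore forces the group to be unimodular. But
`CH` is not: conjugation by `diag(2, 1, …, 1, 1/2)` multiplies `x` and `y` by `1/2` and `z` by
`1/4`, so it maps a compact box of matrices into itself, missing an open set.
-/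

section NonUnimodular

open Measure

variable {G : Type*} [Group G] [TopologicalSpace G] [IsTopologicalGroup G] [LocallyCompactSpace G]
  [MeasurableSpace G] [BorelSpace G] (μ : Measure G) [μ.IsHaarMeasure] [μ.Regular]

theorem map_mul_right_eq_modularCharacter_smul (a : G) :
    μ.map (· * a) = modularCharacter a • μ := by
  have : (μ.map (· * a)).Regular := Regular.map (Homeomorph.mulRight a)
  rw [isMulLeftInvariant_eq_smul_of_regular (μ.map (· * a)) μ,
    ← modularCharacterFun_eq_haarScalarFactor μ a]
  rfl

theorem measure_preimage_mul_right_eq_modularCharacter_mul (a : G) (s : Set G) :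
    μ ((· * a) ⁻¹' s) = modularCharacter a * μ s := by
  have hmap : μ.map (· * a) s = μ ((· * a) ⁻¹' s) :=
    (Homeomorph.mulRight a).toMeasurableEquiv.map_apply s
  rw [← hmap, map_mul_right_eq_modularCharacter_smul, Measure.smul_apply, ENNReal.smul_def,
    smul_eq_mul]

theorem measure_preimage_conj_eq_modularCharacter_mul (a : G) (s : Set G) :
    μ ((fun g ↦ a⁻¹ * g * a) ⁻¹' s) = modularCharacter a * μ s :=
  calc μ ((fun g ↦ a⁻¹ * g * a) ⁻¹' s)
    _ = μ ((· * a) ⁻¹' s) := measure_preimage_mul μ a⁻¹ ((· * a) ⁻¹' s)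
    _ = modularCharacter a * μ s := measure_preimage_mul_right_eq_modularCharacter_mul μ a s

theorem measure_eq_top_of_isFundamentalDomain_of_modularCharacter_ne_one {Γ : Subgroup G}
    [Countable Γ] {D : Set G} (hD : IsFundamentalDomain Γ D μ) {a : G}
    (ha : modularCharacter a ≠ 1) : μ D = ⊤ := by
  -- Right translation commutes with the action of `Γ`, so it carries `D` to another
  -- fundamental domain, which has the same measure.
  have hquasi : Measure.QuasiMeasurePreserving (· * a) μ μ := by
    refine ⟨measurable_mul_const a, ?_⟩
    rw [map_mul_right_eq_modularCharacter_smul]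
    exact smul_absolutelyContinuous
  have hDa : IsFundamentalDomain Γ ((· * a) ⁻¹' D) μ :=
    hD.preimage_of_equiv hquasi Function.bijective_id fun γ g ↦ mul_assoc (γ : G) g a
  have hscale : 1 * μ D = modularCharacter a * μ D := by
    rw [one_mul, ← measure_preimage_mul_right_eq_modularCharacter_mul, hD.measure_eq hDa]
  by_contra hfinite
  have hone := (ENNReal.mul_left_inj (hD.measure_ne_zero (NeZero.ne μ)) hfinite).1 hscale
  exact ha (ENNReal.coe_eq_one.1 hone.symm)

end NonUnimodular

theorem modularCharacter_ne_one_of_conj_contracts {G : Type*} [Group G] [TopologicalSpace G]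
    [IsTopologicalGroup G] [LocallyCompactSpace G] {K : Set G} (hK : IsCompact K)
    (hKclosed : IsClosed K) {a g₀ : G} (hconj : ∀ g ∈ K, a⁻¹ * g * a ∈ K) (hg₀ : g₀ ∉ K)
    (hg₀conj : a⁻¹ * g₀ * a ∈ interior K) : Measure.modularCharacter a ≠ 1 := by
  intro ha
  borelize G
  let μ : Measure G := Measure.haar
  let conj : G → G := fun g ↦ a⁻¹ * g * a
  have hcont : Continuous conj := by fun_prop
  have hpos : 0 < μ (conj ⁻¹' interior K \ K) :=
    ((isOpen_interior.preimage hcont).sdiff hKclosed).measure_pos μ ⟨g₀, hg₀conj, hg₀⟩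
  have hzero : μ (conj ⁻¹' K \ K) = 0 := by
    rw [measure_sdiff (show K ⊆ conj ⁻¹' K from hconj) hKclosed.nullMeasurableSet hK.measure_ne_top,
      measure_preimage_conj_eq_modularCharacter_mul, ha, ENNReal.coe_one, one_mul, tsub_self]
  exact hpos.ne' (measure_mono_null
    (Set.sdiff_subset_sdiff_left (Set.preimage_mono interior_subset)) hzero)

theorem map_comap_eq_self_of_measure_compl_range {α β : Type*} [MeasurableSpace α]
    [MeasurableSpace β] {f : α → β} (hf : MeasurableEmbedding f) {μ : Measure β}
    (hμ : μ (Set.range f)ᶜ = 0) : (μ.comap f).map f = μ := by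
  rw [hf.map_comap]
  exact Measure.restrict_eq_self_of_ae_mem (mem_ae_iff.2 hμ)

section Transfer

variable {G M : Type*} [Group G] [Monoid M] {f : G →* M}

theorem exists_subgroup_image_eq {Δ : Set M} (hΔrange : Δ ⊆ Set.range f) (hone : 1 ∈ Δ)
    (hmul : ∀ a ∈ Δ, ∀ b ∈ Δ, a * b ∈ Δ) (hinv : ∀ a ∈ Δ, ∃ b ∈ Δ, a * b = 1) :
    ∃ Γ : Subgroup G, f '' Γ = Δ := by
  let Γ : Subgroup G :=
    { carrier := f ⁻¹' Δ
      one_mem' := by simpa using hone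
      mul_mem' {a b} ha hb := by simpa using hmul _ ha _ hb
      inv_mem' {a} ha := by
        obtain ⟨b, hb, hab⟩ := hinv _ ha
        have hfinv : f a⁻¹ * f a = 1 := by rw [← map_mul, inv_mul_cancel, map_one]
        simpa [left_inv_eq_right_inv hfinv hab] using hb }
  exact ⟨Γ, Set.image_preimage_eq_of_subset hΔrange⟩

variable [MeasurableSpace G] [MeasurableSpace M] {μ : Measure M}

theorem isMulLeftInvariant_comap [MeasurableMul G] [MeasurableMul M] (hf : MeasurableEmbedding f)
    (hμ : μ (Set.range f)ᶜ = 0) (hinv : ∀ g, μ.map (f g * ·) = μ) :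
    (μ.comap f).IsMulLeftInvariant where
  map_mul_left_eq_self g := by
    have hmap := map_comap_eq_self_of_measure_compl_range hf hμ
    have hpush : ((μ.comap f).map (g * ·)).map f = μ := calc
      ((μ.comap f).map (g * ·)).map f
      _ = ((μ.comap f).map f).map (f g * ·) := by
        rw [Measure.map_map hf.measurable (measurable_const_mul g),
          Measure.map_map (measurable_const_mul (f g)) hf.measurable]
        congr 1
        exact funext fun h ↦ map_mul f g h
      _ = μ := by rw [hmap, hinv]
    rw [← hf.comap_map ((μ.comap f).map (g * ·)), hpush]

theorem isFundamentalDomain_comap (hf : MeasurableEmbedding f) (hμ : μ (Set.range f)ᶜ = 0)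
    (Γ : Subgroup G) {D : Set M} (hD : MeasurableSet D)
    (hfund : ∀ᵐ m ∂μ, ∃! d, d ∈ D ∧ ∃ δ ∈ f '' Γ, d = δ * m) :
    IsFundamentalDomain Γ (f ⁻¹' D) (μ.comap f) := by
  rw [← map_comap_eq_self_of_measure_compl_range hf hμ, hf.ae_map_iff] at hfund
  refine ⟨(hf.measurable hD).nullMeasurableSet, ?_, fun γ₁ γ₂ hne ↦ ?_⟩
  · filter_upwards [hfund] with g hg
    obtain ⟨_, ⟨hd, _, ⟨γ, hγ, rfl⟩, rfl⟩, -⟩ := hg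
    exact ⟨⟨γ, hγ⟩, by simpa [Subgroup.smul_def] using hd⟩
  · refine measure_eq_zero_iff_ae_notMem.2 ?_
    filter_upwards [hfund] with g hunique hg
    refine hne ?_
    simp only [Set.mem_inter_iff, Set.mem_smul_set_iff_inv_smul_mem, Set.mem_preimage,
      Subgroup.smul_def, smul_eq_mul] at hg
    have hsame : f (↑γ₁⁻¹ * g) = f (↑γ₂⁻¹ * g) := hunique.unique
      ⟨hg.1, _, ⟨_, γ₁⁻¹.2, rfl⟩, map_mul f _ _⟩ ⟨hg.2, _, ⟨_, γ₂⁻¹.2, rfl⟩, map_mul f _ _⟩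
    exact inv_injective (Subtype.ext (mul_right_cancel (hf.injective hsame)))

theorem isHaarMeasure_comap [TopologicalSpace G] [IsTopologicalGroup G] [LocallyCompactSpace G]
    [SecondCountableTopology G] [BorelSpace G] [TopologicalSpace M] [MeasurableMul M]
    [IsFiniteMeasureOnCompacts μ] (hf : MeasurableEmbedding f) (hfcont : Continuous f)
    (hμ₀ : μ ≠ 0) (hμ : μ (Set.range f)ᶜ = 0) (hinv : ∀ g, μ.map (f g * ·) = μ) :
    (μ.comap f).IsHaarMeasure := by
  have : (μ.comap f).IsMulLeftInvariant := isMulLeftInvariant_comap hf hμ hinv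
  have : IsFiniteMeasureOnCompacts (μ.comap f) := .comap' μ hfcont hf
  have : NeZero (μ.comap f) := by
    refine ⟨fun hzero ↦ hμ₀ ?_⟩
    rw [← map_comap_eq_self_of_measure_compl_range hf hμ, hzero, Measure.map_zero]
  exact { }

theorem measure_eq_top_of_isClosedEmbedding_of_modularCharacter_ne_one [TopologicalSpace G]
    [IsTopologicalGroup G] [LocallyCompactSpace G] [BorelSpace G] [TopologicalSpace M]
    [SecondCountableTopology M] [ContinuousMul M] [BorelSpace M]
    [IsFiniteMeasureOnCompacts μ] (hf : Topology.IsClosedEmbedding f) {a : G}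
    (ha : Measure.modularCharacter a ≠ 1) (hμ₀ : μ ≠ 0) (hμ : μ (Set.range f)ᶜ = 0)
    (hinv : ∀ g, μ.map (f g * ·) = μ) {Γ : Subgroup G} [Countable Γ] {D : Set M}
    (hD : MeasurableSet D) (hfund : ∀ᵐ m ∂μ, ∃! d, d ∈ D ∧ ∃ δ ∈ f '' Γ, d = δ * m) :
    μ D = ⊤ := by
  have : SecondCountableTopology G := hf.isEmbedding.secondCountableTopology
  have hfm : MeasurableEmbedding f := hf.measurableEmbedding
  have : (μ.comap f).IsHaarMeasure := isHaarMeasure_comap hfm hf.continuous hμ₀ hμ hinv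
  rw [← map_comap_eq_self_of_measure_compl_range hfm hμ, hfm.map_apply]
  exact measure_eq_top_of_isFundamentalDomain_of_modularCharacter_ne_one _
    (isFundamentalDomain_comap hfm hμ Γ hD hfund) ha

end Transfer

theorem isEmbedding_val_generalLinearGroup {ι 𝕜 : Type*} [Fintype ι] [DecidableEq ι] [Field 𝕜]
    [TopologicalSpace 𝕜] [IsTopologicalDivisionRing 𝕜] :
    Topology.IsEmbedding (Units.val : GL ι 𝕜 → Matrix ι ι 𝕜) := by
  refine Units.isEmbedding_val_mk' (f := Inv.inv) (fun A hA ↦ ?_) fun A ↦ by simp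
  have hdet : A.det ≠ 0 := ((Matrix.isUnit_iff_isUnit_det A).1 hA).ne_zero
  have hinv : (Inv.inv : Matrix ι ι 𝕜 → Matrix ι ι 𝕜) = fun B ↦ B.det⁻¹ • B.adjugate := by
    ext1 B
    rw [Matrix.inv_def, Ring.inverse_eq_inv']
  rw [hinv]
  exact ((continuous_id.matrix_det.continuousAt.inv₀ hdet).smul
    continuous_id.matrix_adjugate.continuousAt).continuousWithinAt

theorem isClosedEmbedding_subgroup_val {ι 𝕜 : Type*} [Fintype ι] [DecidableEq ι] [Field 𝕜]
    [TopologicalSpace 𝕜] [IsTopologicalDivisionRing 𝕜] {H : Subgroup (GL ι 𝕜)}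
    (hH : IsClosed (Set.range ((Units.coeHom (Matrix ι ι 𝕜)).comp H.subtype))) :
    Topology.IsClosedEmbedding ((Units.coeHom (Matrix ι ι 𝕜)).comp H.subtype) :=
  ⟨isEmbedding_val_generalLinearGroup.comp Topology.IsEmbedding.subtypeVal, hH⟩

instance matrixSecondCountableTopology {ι κ R : Type*} [Countable ι] [Countable κ]
    [TopologicalSpace R] [SecondCountableTopology R] :
    SecondCountableTopology (Matrix ι κ R) :=
  inferInstanceAs (SecondCountableTopology (ι → κ → R))

instance matrixLocallyCompactSpace {ι κ R : Type*} [Finite ι] [Finite κ] [TopologicalSpace R]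
    [LocallyCompactSpace R] : LocallyCompactSpace (Matrix ι κ R) :=
  inferInstanceAs (LocallyCompactSpace (ι → κ → R))

instance matrixBorelSpace (m k : ℕ) : BorelSpace (Matrix (Fin m) (Fin k) ℝ) :=
  inferInstanceAs (BorelSpace (Fin m → Fin k → ℝ))

namespace CH

variable {n : ℕ}

theorem chMat_one : chMat n 1 0 0 0 = 1 := by
  ext i j
  have := i.isLt
  simp only [chMat, Matrix.one_apply, Fin.ext_iff, Pi.zero_apply, inv_one]
  split_ifs <;> first | rfl | lia

/-- The indices of the middle rows and columns in the `1 + (2n - 2) + 1` block decomposition. -/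
def midIdx (k : Fin (2 * n - 2)) : Fin (2 * n) := ⟨k + 1, by lia⟩

@[simp]
theorem chMat_mid_mid (t : ℝ) (x y : Fin (2 * n - 2) → ℝ) (z : ℝ) (k l : Fin (2 * n - 2)) :
    chMat n t x y z (midIdx k) (midIdx l) = (1 : Matrix _ _ ℝ) k l := by
  simp [chMat, midIdx, Matrix.one_apply, Fin.ext_iff, show (k : ℕ) + 1 ≠ 2 * n - 1 by lia,
    show (l : ℕ) + 1 ≠ 2 * n - 1 by lia]

variable [NeZero n]

variable (n) in
/-- The index of the first row and column in the `1 + (2n - 2) + 1` block decomposition. -/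
def firstIdx : Fin (2 * n) := ⟨0, by have := NeZero.ne n; lia⟩

variable (n) in
/-- The index of the last row and column in the `1 + (2n - 2) + 1` block decomposition. -/
def lastIdx : Fin (2 * n) := ⟨2 * n - 1, by have := NeZero.ne n; lia⟩

theorem forall_idx_iff {P : Fin (2 * n) → Prop} :
    (∀ i, P i) ↔ P (firstIdx n) ∧ (∀ k, P (midIdx k)) ∧ P (lastIdx n) := by
  refine ⟨fun h ↦ ⟨h _, fun k ↦ h _, h _⟩, fun ⟨hfirst, hmid, hlast⟩ i ↦ ?_⟩
  by_cases hi₀ : i.val = 0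
  · exact (Fin.ext hi₀ : i = firstIdx n) ▸ hfirst
  by_cases hil : i.val = 2 * n - 1
  · exact (Fin.ext hil : i = lastIdx n) ▸ hlast
  · have hi : i = midIdx ⟨i.val - 1, by lia⟩ := Fin.ext (by simp only [midIdx]; lia)
    exact hi ▸ hmid _

theorem sum_idx {A : Type*} [AddCommMonoid A] (F : Fin (2 * n) → A) :
    ∑ i, F i = F (firstIdx n) + (∑ k, F (midIdx k) + F (lastIdx n)) := by
  obtain ⟨m, rfl⟩ := Nat.exists_eq_succ_of_ne_zero (NeZero.ne n)
  exact (Fin.sum_univ_succ F).trans (congrArg _ (Fin.sum_univ_castSucc _))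

section Entries

variable (t : ℝ) (x y : Fin (2 * n - 2) → ℝ) (z : ℝ) (k : Fin (2 * n - 2))

@[simp]
theorem chMat_first_first : chMat n t x y z (firstIdx n) (firstIdx n) = t := by
  simp [chMat, firstIdx]

@[simp]
theorem chMat_first_mid : chMat n t x y z (firstIdx n) (midIdx k) = x k := by
  simp [chMat, firstIdx, midIdx, show (k : ℕ) + 1 ≠ 2 * n - 1 by lia]

@[simp]
theorem chMat_first_last : chMat n t x y z (firstIdx n) (lastIdx n) = z := by
  have := NeZero.ne n
  simp [chMat, firstIdx, lastIdx, show 2 * n - 1 ≠ 0 by lia]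

@[simp]
theorem chMat_mid_first : chMat n t x y z (midIdx k) (firstIdx n) = 0 := by
  have := k.isLt
  simp [chMat, firstIdx, midIdx, show (k : ℕ) + 1 ≠ 2 * n - 1 by lia, show 0 ≠ 2 * n - 1 by lia]

@[simp]
theorem chMat_mid_last : chMat n t x y z (midIdx k) (lastIdx n) = y k := by
  simp [chMat, lastIdx, midIdx, show (k : ℕ) + 1 ≠ 2 * n - 1 by lia]

@[simp]
theorem chMat_last_first : chMat n t x y z (lastIdx n) (firstIdx n) = 0 := by
  have := NeZero.ne n
  simp [chMat, firstIdx, lastIdx, show 2 * n - 1 ≠ 0 by lia, show 0 ≠ 2 * n - 1 by lia]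

@[simp]
theorem chMat_last_mid : chMat n t x y z (lastIdx n) (midIdx k) = 0 := by
  have := k.isLt
  simp [chMat, lastIdx, midIdx, show 2 * n - 1 ≠ 0 by lia, show (k : ℕ) + 1 ≠ 2 * n - 1 by lia]

@[simp]
theorem chMat_last_last : chMat n t x y z (lastIdx n) (lastIdx n) = t⁻¹ := by
  have := NeZero.ne n
  simp [chMat, lastIdx, show 2 * n - 1 ≠ 0 by lia]

end Entries

theorem chMat_mul_chMat (t t' : ℝ) (x y x' y' : Fin (2 * n - 2) → ℝ) (z z' : ℝ) :
    chMat n t x y z * chMat n t' x' y' z' =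
      chMat n (t * t') (t • x' + x) (y' + t'⁻¹ • y) (t * z' + x ⬝ᵥ y' + z * t'⁻¹) := by
  simp only [← Matrix.ext_iff, forall_idx_iff, Matrix.mul_apply, sum_idx]
  simp [Matrix.one_apply, dotProduct, mul_comm, add_assoc]

theorem chMat_mul_eq_one {t : ℝ} (ht : t ≠ 0) (x y : Fin (2 * n - 2) → ℝ) (z : ℝ) :
    chMat n t x y z * chMat n t⁻¹ (-(t⁻¹ • x)) (-(t • y)) (x ⬝ᵥ y - z) = 1 := by
  rw [chMat_mul_chMat, ← chMat_one]
  congr 1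
  · exact mul_inv_cancel₀ ht
  · simp [smul_smul, ht]
  · simp
  · simp only [dotProduct_neg, dotProduct_smul, smul_eq_mul, inv_inv]
    ring

theorem chMat_mul_dilation {s : ℝ} (hs : s ≠ 0) (t : ℝ) (x y : Fin (2 * n - 2) → ℝ) (z : ℝ) :
    chMat n t x y z * chMat n s 0 0 0 =
      chMat n s 0 0 0 * chMat n t (s⁻¹ • x) (s⁻¹ • y) (s⁻¹ ^ 2 * z) := by
  rw [chMat_mul_chMat, chMat_mul_chMat]
  congr 1
  · exact mul_comm t s
  · simp [smul_smul, hs]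
  · simp
  · simp only [dotProduct_zero, zero_dotProduct, mul_zero, zero_mul, zero_add, add_zero]
    field_simp

theorem chMat_mem_matrix_iff {S : Set ℝ} (h₀ : 0 ∈ S) (h₁ : 1 ∈ S) {t : ℝ}
    {x y : Fin (2 * n - 2) → ℝ} {z : ℝ} :
    chMat n t x y z ∈ S.matrix ↔
      t ∈ S ∧ t⁻¹ ∈ S ∧ (∀ k, x k ∈ S) ∧ (∀ k, y k ∈ S) ∧ z ∈ S := by
  have hid (k l) : (1 : Matrix (Fin (2 * n - 2)) (Fin (2 * n - 2)) ℝ) k l ∈ S := by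
    rw [Matrix.one_apply]
    split_ifs <;> assumption
  simp only [Set.mem_matrix, forall_idx_iff, chMat_first_first, chMat_first_mid,
    chMat_first_last, chMat_mid_first, chMat_mid_mid, chMat_mid_last, chMat_last_first,
    chMat_last_mid, chMat_last_last]
  grind

-- The corner condition `t * t⁻¹ = 1` excludes `t = 0`, so every condition can be a closed one.
theorem mem_chSet_iff {A : Matrix (Fin (2 * n)) (Fin (2 * n)) ℝ} :
    A ∈ chSet n ↔
      0 ≤ A (firstIdx n) (firstIdx n) ∧
      A (firstIdx n) (firstIdx n) * A (lastIdx n) (lastIdx n) = 1 ∧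
      (∀ k, A (midIdx k) (firstIdx n) = 0) ∧
      (∀ k l, A (midIdx k) (midIdx l) = (1 : Matrix _ _ ℝ) k l) ∧
      A (lastIdx n) (firstIdx n) = 0 ∧
      ∀ k, A (lastIdx n) (midIdx k) = 0 := by
  constructor
  · rintro ⟨t, ht, x, y, z, rfl⟩
    simp [ht.le, ht.ne']
  · rintro ⟨hnonneg, hmul, hmf, hmm, hlf, hlm⟩
    refine ⟨_, hnonneg.lt_of_ne' (left_ne_zero_of_mul_eq_one hmul),
      fun k ↦ A (firstIdx n) (midIdx k), fun k ↦ A (midIdx k) (lastIdx n),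
      A (firstIdx n) (lastIdx n), ?_⟩
    simp [← Matrix.ext_iff, forall_idx_iff, hmf, hmm, hlf, hlm, eq_inv_of_mul_eq_one_right hmul]

theorem isClosed_chSet : IsClosed (chSet n) := by
  have hentry (i j : Fin (2 * n)) :
      Continuous fun A : Matrix (Fin (2 * n)) (Fin (2 * n)) ℝ ↦ A i j :=
    continuous_id.matrix_elem i j
  rw [show chSet n = {A | _} from Set.ext fun _ ↦ mem_chSet_iff]
  simp only [Set.ofPred_and, Set.ofPred_forall]
  exact (isClosed_le continuous_const (hentry _ _)).inter <|
    (isClosed_eq ((hentry _ _).mul (hentry _ _)) continuous_const).inter <|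
    (isClosed_iInter fun _ ↦ isClosed_eq (hentry _ _) continuous_const).inter <|
    (isClosed_iInter fun _ ↦ isClosed_iInter fun _ ↦
      isClosed_eq (hentry _ _) continuous_const).inter <|
    (isClosed_eq (hentry _ _) continuous_const).inter <|
    isClosed_iInter fun _ ↦ isClosed_eq (hentry _ _) continuous_const

variable (n) in
/-- The group `CH` as a subgroup of `GL(2n, ℝ)`. -/
def chSubgroup : Subgroup (GL (Fin (2 * n)) ℝ) where
  carrier := {A | (A : Matrix _ _ ℝ) ∈ chSet n}
  one_mem' := ⟨1, one_pos, 0, 0, 0, chMat_one.symm⟩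
  mul_mem' := by
    rintro A B ⟨t, ht, x, y, z, hA⟩ ⟨t', ht', x', y', z', hB⟩
    exact ⟨t * t', mul_pos ht ht', _, _, _, by rw [Units.val_mul, hA, hB, chMat_mul_chMat]⟩
  inv_mem' := by
    rintro A ⟨t, ht, x, y, z, hA⟩
    exact ⟨t⁻¹, inv_pos.2 ht, _, _, _,
      Units.inv_eq_of_mul_eq_one_right (hA ▸ chMat_mul_eq_one ht.ne' x y z)⟩

variable (n) in
/-- The inclusion of the group `CH` into the monoid of all matrices. -/
def toMatrix : chSubgroup n →* Matrix (Fin (2 * n)) (Fin (2 * n)) ℝ :=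
  (Units.coeHom _).comp (chSubgroup n).subtype

theorem range_toMatrix : Set.range (toMatrix n) = chSet n := by
  refine Set.Subset.antisymm (Set.range_subset_iff.2 fun A ↦ A.2) ?_
  rintro A ⟨t, ht, x, y, z, rfl⟩
  have hinv := chMat_mul_eq_one ht.ne' x y z
  exact ⟨⟨⟨_, _, hinv, mul_eq_one_comm.1 hinv⟩, t, ht, x, y, z, rfl⟩, rfl⟩

theorem exists_toMatrix_eq {t : ℝ} (ht : 0 < t) (x y : Fin (2 * n - 2) → ℝ) (z : ℝ) :
    ∃ g, toMatrix n g = chMat n t x y z :=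
  range_toMatrix.symm.subset ⟨t, ht, x, y, z, rfl⟩

theorem isClosedEmbedding_toMatrix : Topology.IsClosedEmbedding (toMatrix n) :=
  isClosedEmbedding_subgroup_val (range_toMatrix (n := n) ▸ isClosed_chSet)

instance : LocallyCompactSpace (chSubgroup n) :=
  isClosedEmbedding_toMatrix.locallyCompactSpace

instance : BorelSpace (chSubgroup n) where
  measurable_eq := by
    rw [isClosedEmbedding_toMatrix.eq_induced, borel_comap,
      ← BorelSpace.measurable_eq (α := Matrix (Fin (2 * n)) (Fin (2 * n)) ℝ)]
    exact MeasurableSpace.comap_comp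

theorem toMatrix_conj_dilation {s : ℝ} (hs : s ≠ 0) {a g : chSubgroup n}
    (ha : toMatrix n a = chMat n s 0 0 0) {t : ℝ} {x y : Fin (2 * n - 2) → ℝ} {z : ℝ}
    (hg : toMatrix n g = chMat n t x y z) :
    toMatrix n (a⁻¹ * g * a) = chMat n t (s⁻¹ • x) (s⁻¹ • y) (s⁻¹ ^ 2 * z) := by
  rw [mul_assoc, map_mul, map_mul, ha, hg, chMat_mul_dilation hs, ← ha, ← mul_assoc, ← map_mul,
    inv_mul_cancel, map_one, one_mul]

theorem exists_modularCharacter_ne_one : ∃ a : chSubgroup n, Measure.modularCharacter a ≠ 1 := by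
  let K : Set (chSubgroup n) := toMatrix n ⁻¹' (Set.Icc (-2) 2).matrix
  have hK : IsCompact K := isClosedEmbedding_toMatrix.isCompact_preimage isCompact_Icc.matrix
  obtain ⟨a, ha⟩ := exists_toMatrix_eq (n := n) two_pos 0 0 0
  obtain ⟨g₀, hg₀⟩ := exists_toMatrix_eq (n := n) one_pos 0 0 3
  refine ⟨a, modularCharacter_ne_one_of_conj_contracts hK hK.isClosed (g₀ := g₀) ?_ ?_ ?_⟩
  · intro g hg
    obtain ⟨t, -, x, y, z, hgt⟩ := range_toMatrix.subset ⟨g, rfl⟩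
    rw [Set.mem_preimage, hgt, chMat_mem_matrix_iff (by norm_num) (by norm_num)] at hg
    rw [Set.mem_preimage, toMatrix_conj_dilation two_ne_zero ha hgt,
      chMat_mem_matrix_iff (by norm_num) (by norm_num)]
    simp only [Set.mem_Icc, Pi.smul_apply, smul_eq_mul] at hg ⊢
    grind
  · rw [Set.mem_preimage, hg₀, chMat_mem_matrix_iff (by norm_num) (by norm_num)]
    norm_num
  · have hopen : IsOpen (toMatrix n ⁻¹' (Set.Ioo (-2) 2).matrix) :=
      isOpen_Ioo.matrix.preimage isClosedEmbedding_toMatrix.continuous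
    refine interior_maximal (Set.preimage_mono ?_) hopen ?_
    · exact fun A hA i j ↦ Set.Ioo_subset_Icc_self (hA i j)
    rw [Set.mem_preimage, toMatrix_conj_dilation two_ne_zero ha hg₀,
      chMat_mem_matrix_iff (by norm_num) (by norm_num)]
    norm_num

end CH

theorem chGroup_has_no_lattice_general (n : ℕ) (hn : n ≠ 0)
    (μ : Measure (Matrix (Fin (2 * n)) (Fin (2 * n)) ℝ)) [IsFiniteMeasureOnCompacts μ]
    (hμ₀ : μ ≠ 0) (hsupp : μ (chSet n)ᶜ = 0)
    (hinv : ∀ g ∈ chSet n, μ.map (fun h => g * h) = μ)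
    (Δ : Set (Matrix (Fin (2 * n)) (Fin (2 * n)) ℝ)) (hΔsub : Δ ⊆ chSet n)
    (hΔone : 1 ∈ Δ) (hΔmul : ∀ a ∈ Δ, ∀ b ∈ Δ, a * b ∈ Δ)
    (hΔinv : ∀ a ∈ Δ, ∃ b ∈ Δ, a * b = 1) (hΔcount : Δ.Countable)
    (D : Set (Matrix (Fin (2 * n)) (Fin (2 * n)) ℝ)) (hDmeas : MeasurableSet D)
    (hfund : ∀ᵐ g ∂μ, ∃! d, d ∈ D ∧ ∃ δ ∈ Δ, d = δ * g) :
    μ D = ⊤ := by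
  have : NeZero n := ⟨hn⟩
  have hrange : Set.range (CH.toMatrix n) = chSet n := CH.range_toMatrix
  have hclosed : Topology.IsClosedEmbedding (CH.toMatrix n) := CH.isClosedEmbedding_toMatrix
  obtain ⟨a, ha⟩ := CH.exists_modularCharacter_ne_one (n := n)
  obtain ⟨Γ, rfl⟩ := exists_subgroup_image_eq (hrange ▸ hΔsub) hΔone hΔmul hΔinv
  have : Countable Γ :=
    Set.countable_of_injective_of_countable_image hclosed.injective.injOn hΔcount
  exact measure_eq_top_of_isClosedEmbedding_of_modularCharacter_ne_one hclosed ha hμ₀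
    (hrange.symm ▸ hsupp) (fun g ↦ hinv _ g.2) hDmeas hfund

/-- The group `CH = H_{2n−1} ⋊ ℝ₊` contains no lattice: if `μ` is a left
Haar measure on `CH` (viewed as a measure on the matrix space supported on `CH`,
left-invariant under `CH`, positive on open sets meeting `CH` and finite on compact
sets), `Δ` is a discrete subgroup of `CH`, and `D ⊆ CH` is a measurable fundamental
domain for the left-translation action of `Δ` (a.e. orbit of `Δ` meets `D` in exactly
one point), then `D` has infinite measure. -/
theorem chGroup_has_no_lattice (n : ℕ) (hn : 2 ≤ n)
    (μ : Measure (Matrix (Fin (2 * n)) (Fin (2 * n)) ℝ))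
    (hsupp : μ (chSet n)ᶜ = 0)
    (hinv : ∀ g ∈ chSet n, μ.map (fun h => g * h) = μ)
    (hopen : ∀ V : Set (Matrix (Fin (2 * n)) (Fin (2 * n)) ℝ),
      IsOpen V → (V ∩ chSet n).Nonempty → 0 < μ V)
    (hcompact : ∀ K : Set (Matrix (Fin (2 * n)) (Fin (2 * n)) ℝ),
      IsCompact K → μ K < ⊤)
    (Δ : Set (Matrix (Fin (2 * n)) (Fin (2 * n)) ℝ))
    (hΔsub : Δ ⊆ chSet n)
    (hΔone : (1 : Matrix (Fin (2 * n)) (Fin (2 * n)) ℝ) ∈ Δ)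
    (hΔmul : ∀ a ∈ Δ, ∀ b ∈ Δ, a * b ∈ Δ)
    (hΔinv : ∀ a ∈ Δ, ∃ b ∈ Δ, a * b = 1)
    (hΔdisc : DiscreteTopology ↥Δ)
    (D : Set (Matrix (Fin (2 * n)) (Fin (2 * n)) ℝ))
    (hDmeas : MeasurableSet D) (hDsub : D ⊆ chSet n)
    (hfund : ∀ᵐ g ∂μ, ∃! d, d ∈ D ∧ ∃ δ ∈ Δ, d = δ * g) :
    μ D = ⊤ := by
  have : IsFiniteMeasureOnCompacts μ := ⟨fun K ↦ hcompact K⟩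
  exact chGroup_has_no_lattice_general n (by lia) μ
    (by rintro rfl; simpa using hopen Set.univ isOpen_univ ⟨1, trivial, hΔsub hΔone⟩)
    hsupp hinv Δ hΔsub hΔone hΔmul hΔinv
    ((HereditarilyLindelofSpace.isLindelof Δ).countable hΔdisc) D hDmeas hfund
end

section
/- Let n ≥ 3 and let u, v ∈ ℤ^{2n} be integer vectors with ω(u, v) > 0 such that the additive subgroup of ℝ² generated by the 2n column vectors (u_k, v_k), k = 1, …, 2n, equals ℤ². Then there exists γ ∈ Sp(2n, ℤ) such that the vectors u' = γu, v' = γv satisfy: (i) ω₁(u', v') > 0; and (ii) for each j = 2, …, n one has u'_{2j} = 0, v'_{2j−1} = 0, v'_{2j} = 0 and u'_{2j−1} ≥ 0 (i.e. the j-th 2×2 block M_j = [[u'_{2j−1}, u'_{2j}], [v'_{2j−1}, v'_{2j}]] has the form [[a_j, 0], [0, 0]] with a_j ≥ 0). -/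
/-!
Two subgroups of the symplectic group suffice: `SL₂ⁿ` acting block by block, and `GLₙ` acting by
`diag(A, A⁻ᵀ)` on the first and second coordinates of the blocks. An element of `SL₂ⁿ` kills the
second coordinate of `v` in every block, and then an element of `GLₙ` moves `v` into a single chosen
block. A further element of `SL₂ⁿ` replaces each block of `u` by `(gcd, 0)`; it cannot spoil the
zero blocks of `v`. Since `v` vanishes outside the chosen block, that block carries the whole of the
invariant `ω(u, v)`.
-/

open Matrix

section CommRing

variable {R : Type*} [CommRing R] {n : ℕ}

/-- The enumeration of the coordinates of `R^{2n}` by pairs: `(0, j)` and `(1, j)` are sent to the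
first and the second coordinate of the `j`-th block. -/
def blockCoord (n : ℕ) : Fin 2 × Fin n ≃ Fin (2 * n) :=
  (Equiv.prodComm _ _).trans (finProdFinEquiv.trans (finCongr (Nat.mul_comm n 2)))

lemma blockCoord_zero (j : Fin n) : blockCoord n (0, j) = idx1 n j := by
  ext
  simp [blockCoord, idx1]

lemma blockCoord_one (j : Fin n) : blockCoord n (1, j) = idx2 n j := by
  ext
  simp [blockCoord, idx2, add_comm]

lemma reindex_blockDiagonal_mulVec_apply {m o κ : Type*} [Fintype m] [Finite o] [Fintype κ]
    [DecidableEq o] (e : m × o ≃ κ) (M : o → Matrix m m R) (x : κ → R) (i : m) (k : o) :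
    (reindex e e (blockDiagonal M) *ᵥ x) (e (i, k)) = (M k *ᵥ fun l => x (e (l, k))) i := by
  have := Fintype.ofFinite o
  simp [mulVec, dotProduct, ← e.sum_comp, Fintype.sum_prod_type, blockDiagonal_apply]

lemma IsSymplectic.mul {g h : Matrix (Fin (2 * n)) (Fin (2 * n)) R}
    (hg : IsSymplectic n g) (hh : IsSymplectic n h) : IsSymplectic n (g * h) := by
  intro x y
  rw [← mulVec_mulVec, ← mulVec_mulVec, hg, hh]

/-- The matrix of the linear map acting on the `j`-th coordinate plane of `R^{2n}` by `M j`. -/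
def blockwise (M : Fin n → Matrix (Fin 2) (Fin 2) R) : Matrix (Fin (2 * n)) (Fin (2 * n)) R :=
  reindex (blockCoord n) (blockCoord n) (blockDiagonal M)

lemma blockwise_mulVec_blockCoord (M : Fin n → Matrix (Fin 2) (Fin 2) R) (x : Fin (2 * n) → R)
    (i : Fin 2) (j : Fin n) :
    (blockwise M *ᵥ x) (blockCoord n (i, j)) = (M j *ᵥ ![x (idx1 n j), x (idx2 n j)]) i := by
  have block_eq : (fun l => x (blockCoord n (l, j))) = ![x (idx1 n j), x (idx2 n j)] := by
    ext l
    fin_cases l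
    · simp [blockCoord_zero]
    · simp [blockCoord_one]
  rw [blockwise, reindex_blockDiagonal_mulVec_apply, block_eq]

lemma blockwise_mulVec_idx1 (M : Fin n → Matrix (Fin 2) (Fin 2) R) (x : Fin (2 * n) → R)
    (j : Fin n) :
    (blockwise M *ᵥ x) (idx1 n j) = (M j *ᵥ ![x (idx1 n j), x (idx2 n j)]) 0 := by
  rw [← blockwise_mulVec_blockCoord, blockCoord_zero]

lemma blockwise_mulVec_idx2 (M : Fin n → Matrix (Fin 2) (Fin 2) R) (x : Fin (2 * n) → R)
    (j : Fin n) :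
    (blockwise M *ᵥ x) (idx2 n j) = (M j *ᵥ ![x (idx1 n j), x (idx2 n j)]) 1 := by
  rw [← blockwise_mulVec_blockCoord, blockCoord_one]

lemma omegaJ_blockwise_mulVec (M : Fin n → Matrix (Fin 2) (Fin 2) R) (x y : Fin (2 * n) → R)
    (j : Fin n) :
    omegaJ n j (blockwise M *ᵥ x) (blockwise M *ᵥ y) = (M j).det * omegaJ n j x y := by
  simp only [omegaJ, blockwise_mulVec_idx1, blockwise_mulVec_idx2, mulVec_eq_sum,
    Fin.sum_univ_two, det_fin_two, cons_val_zero, cons_val_one, Pi.add_apply, Pi.smul_apply,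
    transpose_apply, op_smul_eq_mul]
  ring

lemma isSymplectic_blockwise (M : Fin n → SpecialLinearGroup (Fin 2) R) :
    IsSymplectic n (blockwise fun j => (M j).val) := by
  intro x y
  simp only [omegaForm, omegaJ_blockwise_mulVec, (M _).prop, one_mul]

lemma omegaForm_eq_dotProduct_sub_dotProduct (x y : Fin (2 * n) → R) :
    omegaForm n x y =
      (x ∘ idx1 n) ⬝ᵥ (y ∘ idx2 n) - (x ∘ idx2 n) ⬝ᵥ (y ∘ idx1 n) := by
  simp only [omegaForm, omegaJ, dotProduct, Finset.sum_sub_distrib, Function.comp_apply]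

lemma omegaForm_eq_omegaJ_of_eq_zero {x y : Fin (2 * n) → R} {j₀ : Fin n}
    (h1 : ∀ j ≠ j₀, y (idx1 n j) = 0) (h2 : ∀ j ≠ j₀, y (idx2 n j) = 0) :
    omegaForm n x y = omegaJ n j₀ x y :=
  Fintype.sum_eq_single j₀ fun j hj => by simp [omegaJ, h1 j hj, h2 j hj]

lemma mulVec_dotProduct_inv_transpose_mulVec {ι : Type*} [Fintype ι] [DecidableEq ι]
    (A : GL ι R) (x y : ι → R) :
    (A.val *ᵥ x) ⬝ᵥ ((A⁻¹).valᵀ *ᵥ y) = x ⬝ᵥ y := by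
  rw [dotProduct_mulVec, vecMul_transpose, mulVec_mulVec, Units.inv_mul, one_mulVec]

/-- The matrix `diag(A, A⁻ᵀ)` of the Levi factor of the Siegel parabolic: `A` acts on the first
coordinates of the blocks, and `A⁻ᵀ` on the second coordinates. -/
def siegelLevi (A : GL (Fin n) R) : Matrix (Fin (2 * n)) (Fin (2 * n)) R :=
  reindex ((Equiv.prodComm _ _).trans (blockCoord n)) ((Equiv.prodComm _ _).trans (blockCoord n))
    (blockDiagonal ![A.val, (A⁻¹).valᵀ])

lemma siegelLevi_mulVec_comp_idx1 (A : GL (Fin n) R) (x : Fin (2 * n) → R) :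
    (siegelLevi A *ᵥ x) ∘ idx1 n = A.val *ᵥ (x ∘ idx1 n) := by
  ext j
  simpa [siegelLevi, Function.comp_def, blockCoord_zero] using reindex_blockDiagonal_mulVec_apply
    ((Equiv.prodComm _ _).trans (blockCoord n)) ![A.val, (A⁻¹).valᵀ] x j 0

lemma siegelLevi_mulVec_comp_idx2 (A : GL (Fin n) R) (x : Fin (2 * n) → R) :
    (siegelLevi A *ᵥ x) ∘ idx2 n = (A⁻¹).valᵀ *ᵥ (x ∘ idx2 n) := by
  ext j
  simpa [siegelLevi, Function.comp_def, blockCoord_one] using reindex_blockDiagonal_mulVec_apply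
    ((Equiv.prodComm _ _).trans (blockCoord n)) ![A.val, (A⁻¹).valᵀ] x j 1

lemma isSymplectic_siegelLevi (A : GL (Fin n) R) : IsSymplectic n (siegelLevi A) := by
  intro x y
  simp only [omegaForm_eq_dotProduct_sub_dotProduct, siegelLevi_mulVec_comp_idx1,
    siegelLevi_mulVec_comp_idx2, mulVec_dotProduct_inv_transpose_mulVec]
  rw [dotProduct_comm (_ *ᵥ _), mulVec_dotProduct_inv_transpose_mulVec, dotProduct_comm (y ∘ _)]

end CommRing

section IsBezout

variable {R : Type*} [CommRing R] [IsDomain R] [IsBezout R] [GCDMonoid R]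

lemma exists_specialLinearGroup_mulVec_eq_gcd (a b : R) :
    ∃ M : SpecialLinearGroup (Fin 2) R, M.val *ᵥ ![a, b] = ![gcd a b, 0] := by
  by_cases hg : gcd a b = 0
  · obtain ⟨rfl, rfl⟩ := (gcd_eq_zero_iff a b).1 hg
    exact ⟨1, by simp [hg]⟩
  obtain ⟨p, q, hpq⟩ := exists_gcd_eq_mul_add_mul a b
  obtain ⟨a', ha⟩ := gcd_dvd_left a b
  obtain ⟨b', hb⟩ := gcd_dvd_right a b
  have det_eq_one : p * a' - q * -b' = 1 := by
    apply mul_left_cancel₀ hg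
    linear_combination -hpq - p * ha - q * hb
  have snd_eq_zero : -(a * b') + b * a' = 0 := by linear_combination -b' * ha + a' * hb
  refine ⟨⟨!![p, q; -b', a'], by rw [det_fin_two_of, det_eq_one]⟩, ?_⟩
  ext i
  fin_cases i
  · simp [hpq]
  · simpa using snd_eq_zero

lemma exists_blockwise_mulVec_eq_gcd {n : ℕ} (x : Fin (2 * n) → R) :
    ∃ M : Fin n → SpecialLinearGroup (Fin 2) R,
      ∀ j, (blockwise (fun j => (M j).val) *ᵥ x) (idx1 n j) = gcd (x (idx1 n j)) (x (idx2 n j)) ∧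
        (blockwise (fun j => (M j).val) *ᵥ x) (idx2 n j) = 0 := by
  choose M hM using fun j => exists_specialLinearGroup_mulVec_eq_gcd (x (idx1 n j)) (x (idx2 n j))
  exact ⟨M, fun j => by simp [blockwise_mulVec_idx1, blockwise_mulVec_idx2, hM]⟩

end IsBezout

section IsPrincipalIdealRing

variable {R : Type*} [CommRing R] [IsDomain R] [IsPrincipalIdealRing R]

lemma exists_basis_repr_eq_zero {ι M : Type*} [Finite ι] [AddCommGroup M] [Module R M]
    (b : Module.Basis ι R M) (w : M) (i₀ : ι) :
    ∃ b' : Module.Basis ι R M, ∀ i ≠ i₀, b'.repr w i = 0 := by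
  classical
  -- `R ∙ w` has rank at most one, so its Smith normal form involves at most one basis vector.
  obtain ⟨m, snf⟩ := (R ∙ w).smithNormalForm b
  have hm : m ≤ 1 := by
    have := finrank_span_le_card (R := R) {w}
    rwa [Module.finrank_eq_card_basis snf.bN, Fintype.card_fin, Set.toFinset_singleton,
      Finset.card_singleton] at this
  have : Subsingleton (Fin m) := Fin.subsingleton_iff_le_one.2 hm
  have repr_eq_zero (i : ι) (hi : i ∉ Set.range snf.f) : snf.bM.repr w i = 0 :=
    snf.repr_eq_zero_of_notMem_range ⟨w, Submodule.mem_span_singleton_self w⟩ hi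
  rcases isEmpty_or_nonempty (Fin m) with _ | ⟨⟨k⟩⟩
  · exact ⟨snf.bM, fun i _ => repr_eq_zero i (by simp)⟩
  · refine ⟨snf.bM.reindex (Equiv.swap (snf.f k) i₀), fun i hi => ?_⟩
    rw [Module.Basis.repr_reindex_apply]
    apply repr_eq_zero
    rintro ⟨l, hl⟩
    rw [Subsingleton.elim l k, Equiv.eq_symm_apply, Equiv.swap_apply_left] at hl
    exact hi hl.symm

lemma exists_generalLinearGroup_mulVec_eq_zero {ι : Type*} [Fintype ι] [DecidableEq ι]
    (w : ι → R) (i₀ : ι) : ∃ A : GL ι R, ∀ i ≠ i₀, (A.val *ᵥ w) i = 0 := by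
  obtain ⟨b, hb⟩ := exists_basis_repr_eq_zero (Pi.basisFun R ι) w i₀
  refine ⟨⟨b.toMatrix (Pi.basisFun R ι), (Pi.basisFun R ι).toMatrix b,
    b.toMatrix_mul_toMatrix_flip _, Module.Basis.toMatrix_mul_toMatrix_flip _ _⟩, fun i hi => ?_⟩
  exact (congrFun ((Pi.basisFun R ι).toMatrix_mulVec_repr b w) i).trans (hb i hi)

variable {n : ℕ}

lemma exists_isSymplectic_mulVec_eq_zero (v : Fin (2 * n) → R) (j₀ : Fin n) :
    ∃ γ, IsSymplectic n γ ∧ ∀ j ≠ j₀, (γ *ᵥ v) (idx1 n j) = 0 ∧ (γ *ᵥ v) (idx2 n j) = 0 := by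
  classical
  let _ : GCDMonoid R := IsBezout.toGCDDomain R
  obtain ⟨M, hM⟩ := exists_blockwise_mulVec_eq_gcd v
  set w := blockwise (fun j => (M j).val) *ᵥ v with hw
  have idx2_eq_zero : w ∘ idx2 n = 0 := funext fun j => (hM j).2
  obtain ⟨A, hA⟩ := exists_generalLinearGroup_mulVec_eq_zero (w ∘ idx1 n) j₀
  refine ⟨_, (isSymplectic_siegelLevi A).mul (isSymplectic_blockwise M), fun j hj => ?_⟩
  rw [← mulVec_mulVec, ← hw]
  constructor
  · rw [← hA j hj, ← siegelLevi_mulVec_comp_idx1, Function.comp_apply]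
  · rw [← Function.comp_apply (f := siegelLevi A *ᵥ w), siegelLevi_mulVec_comp_idx2, idx2_eq_zero,
      mulVec_zero, Pi.zero_apply]

theorem normalize_blocks_nonneg_general [NormalizedGCDMonoid R] (u v : Fin (2 * n) → R)
    (j₀ : Fin n) :
    ∃ γ : Matrix (Fin (2 * n)) (Fin (2 * n)) R,
      IsSymplectic n γ ∧
      omegaJ n j₀ (γ *ᵥ u) (γ *ᵥ v) = omegaForm n u v ∧
      ∀ j ≠ j₀,
        (γ *ᵥ u) (idx2 n j) = 0 ∧
        (γ *ᵥ v) (idx1 n j) = 0 ∧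
        (γ *ᵥ v) (idx2 n j) = 0 ∧
        normalize ((γ *ᵥ u) (idx1 n j)) = (γ *ᵥ u) (idx1 n j) := by
  obtain ⟨γ, hγ, hv⟩ := exists_isSymplectic_mulVec_eq_zero v j₀
  obtain ⟨M, hu⟩ := exists_blockwise_mulVec_eq_gcd (γ *ᵥ u)
  have hδ := (isSymplectic_blockwise M).mul hγ
  set δ := blockwise (fun j => (M j).val) * γ with δ_def
  have hv1 (j) (hj : j ≠ j₀) : (δ *ᵥ v) (idx1 n j) = 0 := by
    simp [δ_def, ← mulVec_mulVec, blockwise_mulVec_idx1, hv j hj]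
  have hv2 (j) (hj : j ≠ j₀) : (δ *ᵥ v) (idx2 n j) = 0 := by
    simp [δ_def, ← mulVec_mulVec, blockwise_mulVec_idx2, hv j hj]
  refine ⟨δ, hδ, ?_, fun j hj => ⟨?_, hv1 j hj, hv2 j hj, ?_⟩⟩
  · rw [← omegaForm_eq_omegaJ_of_eq_zero hv1 hv2, hδ]
  · rw [δ_def, ← mulVec_mulVec, (hu j).2]
  · rw [δ_def, ← mulVec_mulVec, (hu j).1, normalize_gcd]

end IsPrincipalIdealRing

/-- For `n ≥ 3` and integer vectors `u, v ∈ ℤ^{2n}` with `ω(u, v) > 0`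
whose columns `(u_k, v_k)` generate `ℤ²`, there is `γ ∈ Sp(2n, ℤ)` such that for
`u' = γu, v' = γv`: `ω₁(u', v') > 0` and for each `j ≥ 2` the `j`-th block is
`[[a_j, 0], [0, 0]]` with `a_j ≥ 0`. -/
theorem normalize_blocks_nonneg (n : ℕ) (hn : 3 ≤ n)
    (u v : Fin (2 * n) → ℤ) (hpos : 0 < omegaForm n u v)
    (hgen : AddSubgroup.closure
      (Set.range fun k : Fin (2 * n) => ((u k, v k) : ℤ × ℤ)) = ⊤) :
    ∃ γ : Matrix (Fin (2 * n)) (Fin (2 * n)) ℤ,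
      IsSymplectic n γ ∧
      0 < omegaJ n (⟨0, by omega⟩ : Fin n) (γ.mulVec u) (γ.mulVec v) ∧
      ∀ j : Fin n, 1 ≤ j.val →
        γ.mulVec u (idx2 n j) = 0 ∧
        γ.mulVec v (idx1 n j) = 0 ∧
        γ.mulVec v (idx2 n j) = 0 ∧
        0 ≤ γ.mulVec u (idx1 n j) := by
  obtain ⟨γ, hγ, homega, hblock⟩ := normalize_blocks_nonneg_general u v ⟨0, by omega⟩
  refine ⟨γ, hγ, homega ▸ hpos, fun j hj => ?_⟩
  simpa only [Int.nonneg_iff_normalize_eq_self] using hblock j (Fin.ne_of_val_ne (by lia))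
end

section
/- Let n ≥ 3 and let u, v ∈ ℤ^{2n} be integer vectors with ω(u, v) > 0 such that the additive subgroup of ℝ² generated by the 2n column vectors (u_k, v_k), k = 1, …, 2n, equals ℤ². Set a₁ = ω(u, v). Then there exists γ ∈ Sp(2n, ℤ) such that the vectors u' = γu, v' = γv satisfy: u'₁ = a₁, u'₂ = 0, v'₁ = 0, v'₂ = 1 (i.e. the first 2×2 block M₁ equals [[a₁, 0], [0, 1]]), and for each j = 2, …, n one has u'_{2j} = 0, v'_{2j−1} = 0, v'_{2j} = 0 and 0 ≤ u'_{2j−1} < a₁ (i.e. M_j = [[a_j, 0], [0, 0]] with 0 ≤ a_j < a₁). -/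
/-!
Isometries of an alternating form `B` are supplied by Eichler transformations. One of them carries
`v` to `w` as soon as some `e` satisfies `B e v = B e w = 1`; two such moves carry a unimodular
vector `v` orthogonal to `e` to the partner `f` of `e`, passing through `v + f`.

For the standard form let `e_i`, `f_i` be the two standard basis vectors of block `i`. First `SL₂`
acting in the blocks makes `v` orthogonal to `e_i`, so `v` can be moved to `f_i`. The remaining
moves fix `f_i`, and `ω(u, v)` is thereafter the first entry of `u` in block `i`. Unimodularity of
the pair provides `s` with `ω(s, u) = 1` and `ω(s, v) = 0`; the Eichler transformation along `f_i`
and a multiple of `s` clears the second entry of `u` in block `i`. Then `SL₂` in the other blocks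
clears their second entries, and an Eichler transformation along `f_i` reduces their first entries
modulo `ω(u, v)`.
-/

section AlternatingForm

variable {R M : Type*} [CommRing R] [AddCommGroup M] [Module R M] {B : LinearMap.BilinForm R M}

/-- The Eichler transformation `x ↦ x + B(f, x) w + (B(w, x) + c B(f, x)) f` along orthogonal
vectors `f` and `w`. The term in `c` is the symplectic transvection along `f`. -/
def eichler (hB : B.IsAlt) {f w : M} (hfw : B f w = 0) (c : R) : B →bᵢ B where
  toLinearMap := LinearMap.id + (B f).smulRight w + (B w + c • B f).smulRight f
  map_app' x y := by
    have hwf : B w f = 0 := hB.isRefl f w hfw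
    simp only [AddHom.toFun_eq_coe, LinearMap.coe_toAddHom, LinearMap.add_apply, LinearMap.id_apply,
      LinearMap.smulRight_apply, LinearMap.smul_apply, map_add, map_smul, smul_eq_mul,
      hB.self_eq_zero, hfw, hwf, ← hB.neg_eq f x, ← hB.neg_eq w x]
    ring

lemma eichler_apply (hB : B.IsAlt) {f w : M} (hfw : B f w = 0) (c : R) (x : M) :
    eichler hB hfw c x = x + B f x • w + (B w x + c * B f x) • f :=
  rfl

lemma eichler_apply_self (hB : B.IsAlt) {f w : M} (hfw : B f w = 0) (c : R) :
    eichler hB hfw c f = f := by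
  simp [eichler_apply, hB.self_eq_zero, hB.isRefl f w hfw]

lemma exists_isometry_map_eq (hB : B.IsAlt) {e v w : M} (hev : B e v = 1) (hew : B e w = 1) :
    ∃ g : B →bᵢ B, g v = w := by
  have horth : B e (w - v) = 0 := by rw [map_sub, hew, hev, sub_self]
  refine ⟨eichler hB horth (-B (w - v) v), ?_⟩
  rw [eichler_apply, hev]
  module

lemma exists_isometry_map_eq_of_orthogonal (hB : B.IsAlt) {e f t v : M} (hef : B e f = 1)
    (hev : B e v = 0) (htv : B t v = 1) : ∃ g : B →bᵢ B, g v = f := by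
  have htv' : B (t - B t f • e) v = 1 := by simp [htv, hev]
  have htvf : B (t - B t f • e) (v + f) = 1 := by simp [htv, hev, hef]
  have hevf : B e (v + f) = 1 := by simp [hev, hef]
  obtain ⟨g₁, hg₁⟩ := exists_isometry_map_eq hB htv' htvf
  obtain ⟨g₂, hg₂⟩ := exists_isometry_map_eq hB hevf hef
  exact ⟨g₂.comp g₁, by simp [hg₁, hg₂]⟩

lemma exists_isometry_fixing_orthogonal (hB : B.IsAlt) {e f s u : M} (hef : B e f = 1)
    (hsf : B s f = 0) (hsu : B s u = 1) : ∃ g : B →bᵢ B, g f = f ∧ B e (g u) = 0 := by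
  have horth : B f (-B e u • s) = 0 := by rw [map_smul, hB.isRefl s f hsf, smul_zero]
  refine ⟨eichler hB horth (B e u * B e s), eichler_apply_self hB horth _, ?_⟩
  simp only [eichler_apply, map_add, map_smul, LinearMap.smul_apply, smul_eq_mul, hsu, hef]
  ring

lemma exists_isometry_fixing_map_eq_add_smul (hB : B.IsAlt) {f u w : M} (hfw : B f w = 0)
    (hwu : B w u = 0) : ∃ g : B →bᵢ B, g f = f ∧ g u = u + B u f • w := by
  have horth : B f (-w) = 0 := by rw [map_neg, hfw, neg_zero]
  refine ⟨eichler hB horth 0, eichler_apply_self hB horth _, ?_⟩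
  simp [eichler_apply, hwu, ← hB.neg_eq u f]

end AlternatingForm

section BlockCoordinates

variable {R : Type*} {n : ℕ}

lemma idx1_injective : Function.Injective (idx1 n) := fun i j h => by
  simpa [idx1, Fin.ext_iff] using h

lemma idx2_injective : Function.Injective (idx2 n) := fun i j h => by
  simpa [idx2, Fin.ext_iff] using h

lemma idx1_ne_idx2 (i j : Fin n) : idx1 n i ≠ idx2 n j := by
  simp only [idx1, idx2, ne_eq, Fin.mk.injEq]
  omega

lemma forall_idx {p : Fin (2 * n) → Prop} :
    (∀ k, p k) ↔ ∀ j, p (idx1 n j) ∧ p (idx2 n j) := by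
  refine ⟨fun h j => ⟨h _, h _⟩, fun h k => ?_⟩
  obtain ⟨hp1, hp2⟩ := h ⟨k / 2, by omega⟩
  rcases Nat.mod_two_eq_zero_or_one k with hk | hk
  · convert hp1
    exact Fin.ext (by simp only [idx1]; omega)
  · convert hp2
    exact Fin.ext (by simp only [idx2]; omega)

lemma ext_idx {x y : Fin (2 * n) → R} (h1 : ∀ j, x (idx1 n j) = y (idx1 n j))
    (h2 : ∀ j, x (idx2 n j) = y (idx2 n j)) : x = y :=
  funext (forall_idx.2 fun j => ⟨h1 j, h2 j⟩)

/-- The vector with entries `p j`, `q j` in the `j`-th block. -/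
def ofBlocks (p q : Fin n → R) : Fin (2 * n) → R := fun k =>
  if k.val % 2 = 0 then p ⟨k / 2, by omega⟩ else q ⟨k / 2, by omega⟩

@[simp] lemma ofBlocks_idx1 (p q : Fin n → R) (j : Fin n) : ofBlocks p q (idx1 n j) = p j := by
  simp [ofBlocks, idx1]

@[simp] lemma ofBlocks_idx2 (p q : Fin n → R) (j : Fin n) : ofBlocks p q (idx2 n j) = q j := by
  simp [ofBlocks, idx2, Nat.mul_add_div]

end BlockCoordinates

section SymplecticForm

variable {R : Type*} [CommRing R] {n : ℕ}

variable (R n) in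
/-- `omegaForm` as a bilinear form, whose isometries are the symplectic linear maps. -/
def symplecticForm : LinearMap.BilinForm R (Fin (2 * n) → R) :=
  ∑ j, ((LinearMap.mul R R).compl₁₂ (.proj (idx1 n j)) (.proj (idx2 n j)) -
    (LinearMap.mul R R).compl₁₂ (.proj (idx2 n j)) (.proj (idx1 n j)))

lemma symplecticForm_apply (x y : Fin (2 * n) → R) : symplecticForm R n x y = omegaForm n x y := by
  simp [symplecticForm, omegaForm, omegaJ]

lemma symplecticForm_isAlt : (symplecticForm R n).IsAlt := fun x => by
  simp [symplecticForm_apply, omegaForm, omegaJ, mul_comm]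

lemma symplecticForm_single_idx1 (j : Fin n) (x : Fin (2 * n) → R) :
    symplecticForm R n (Pi.single (idx1 n j) 1) x = x (idx2 n j) := by
  simp [symplecticForm_apply, omegaForm, omegaJ, Pi.single_apply, idx1_injective.eq_iff,
    (idx1_ne_idx2 _ _).symm]

lemma symplecticForm_single_idx2 (j : Fin n) (x : Fin (2 * n) → R) :
    symplecticForm R n x (Pi.single (idx2 n j) 1) = x (idx1 n j) := by
  simp [symplecticForm_apply, omegaForm, omegaJ, Pi.single_apply, idx2_injective.eq_iff,
    idx1_ne_idx2]

lemma isometry_apply_idx1_of_map_eq_single {i : Fin n} {v : Fin (2 * n) → R}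
    {g : symplecticForm R n →bᵢ symplecticForm R n} (hg : g v = Pi.single (idx2 n i) 1)
    (u : Fin (2 * n) → R) : g u (idx1 n i) = omegaForm n u v := by
  rw [← symplecticForm_single_idx2 i (g u), ← hg, g.map_app, symplecticForm_apply]

lemma isSymplectic_toMatrix' (g : symplecticForm R n →bᵢ symplecticForm R n) :
    IsSymplectic n (LinearMap.toMatrix' g.toLinearMap) := fun x y => by
  simp only [LinearMap.toMatrix'_mulVec, ← symplecticForm_apply]
  exact g.map_app x y

lemma exists_symplecticForm_eq_of_span_eq_top {u v : Fin (2 * n) → R}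
    (hspan : Submodule.span R (Set.range fun k => (u k, v k)) = ⊤) (a b : R) :
    ∃ s, symplecticForm R n s u = a ∧ symplecticForm R n s v = b := by
  let pairing := ((symplecticForm R n).flip u).prod ((symplecticForm R n).flip v)
  have hcolumn : ∀ k, (u k, v k) ∈ LinearMap.range pairing := forall_idx.2 fun j =>
    ⟨⟨-Pi.single (idx2 n j) 1, by
        simp [pairing, (symplecticForm_isAlt (R := R)).neg_eq, symplecticForm_single_idx2]⟩,
      ⟨Pi.single (idx1 n j) 1, by simp [pairing, symplecticForm_single_idx1]⟩⟩
  have hrange : LinearMap.range pairing = ⊤ :=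
    top_le_iff.1 (hspan ▸ Submodule.span_le.2 (Set.range_subset_iff.2 hcolumn))
  obtain ⟨s, hs⟩ := LinearMap.range_eq_top.1 hrange (a, b)
  exact ⟨s, Prod.ext_iff.1 hs⟩

end SymplecticForm

section BlockwiseSL2

open scoped MatrixGroups

variable {R : Type*} [CommRing R] {n : ℕ}

/-- The isometry of the standard symplectic form acting on the `j`-th block by `A j`. -/
def blockwiseSL2 (A : Fin n → SL(2, R)) : symplecticForm R n →bᵢ symplecticForm R n where
  toFun x := ofBlocks (fun j => A j 0 0 * x (idx1 n j) + A j 0 1 * x (idx2 n j))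
    (fun j => A j 1 0 * x (idx1 n j) + A j 1 1 * x (idx2 n j))
  map_add' x y := by
    apply ext_idx <;> intro j <;> simp only [Pi.add_apply, ofBlocks_idx1, ofBlocks_idx2] <;> ring
  map_smul' c x := by
    apply ext_idx <;> intro j <;>
      simp only [Pi.smul_apply, smul_eq_mul, RingHom.id_apply, ofBlocks_idx1, ofBlocks_idx2] <;>
      ring
  map_app' x y := by
    simp only [symplecticForm_apply, omegaForm, omegaJ, ofBlocks_idx1, ofBlocks_idx2]
    refine Finset.sum_congr rfl fun j _ => ?_
    have hdet : A j 0 0 * A j 1 1 - A j 0 1 * A j 1 0 = 1 := by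
      rw [← Matrix.det_fin_two, Matrix.SpecialLinearGroup.det_coe]
    linear_combination (x (idx1 n j) * y (idx2 n j) - x (idx2 n j) * y (idx1 n j)) * hdet

lemma blockwiseSL2_apply (A : Fin n → SL(2, R)) (x : Fin (2 * n) → R) :
    blockwiseSL2 A x =
      ofBlocks (fun j => A j 0 0 * x (idx1 n j) + A j 0 1 * x (idx2 n j))
        (fun j => A j 1 0 * x (idx1 n j) + A j 1 1 * x (idx2 n j)) :=
  rfl

lemma blockwiseSL2_single_idx2 {A : Fin n → SL(2, R)} {i : Fin n} (hA : A i = 1) :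
    blockwiseSL2 A (Pi.single (idx2 n i) 1) = Pi.single (idx2 n i) 1 := by
  apply ext_idx <;> intro j <;> rcases eq_or_ne j i with rfl | hji <;>
    simp_all [blockwiseSL2_apply, idx1_ne_idx2, idx2_injective.eq_iff]

variable [IsDomain R] [IsBezout R]

lemma exists_SL2_annihilating_row (x y : R) :
    ∃ A : SL(2, R), A 1 0 * x + A 1 1 * y = 0 := by
  classical
  let := IsBezout.toGCDDomain R
  obtain ⟨x', y', hx, hy, hunit⟩ := extract_gcd x y
  have hcoprime : IsCoprime (-y') x' := ((gcd_isUnit_iff x' y').1 hunit).symm.neg_left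
  obtain ⟨A, hA0, hA1⟩ := hcoprime.exists_SL2_row 1
  refine ⟨A, ?_⟩
  rw [hA0, hA1]
  linear_combination -y' * hx + x' * hy

lemma exists_isometry_idx2_eq_zero (x : Fin (2 * n) → R) :
    ∃ g : symplecticForm R n →bᵢ symplecticForm R n, (∀ j, g x (idx2 n j) = 0) ∧
      ∀ j, x (idx2 n j) = 0 → g (Pi.single (idx2 n j) 1) = Pi.single (idx2 n j) 1 := by
  have hblock (j : Fin n) : ∃ A : SL(2, R),
      A 1 0 * x (idx1 n j) + A 1 1 * x (idx2 n j) = 0 ∧ (x (idx2 n j) = 0 → A = 1) := by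
    by_cases hx : x (idx2 n j) = 0
    · exact ⟨1, by simp [hx], fun _ => rfl⟩
    · obtain ⟨A, hA⟩ := exists_SL2_annihilating_row (x (idx1 n j)) (x (idx2 n j))
      exact ⟨A, hA, fun h => absurd h hx⟩
  choose A hrow hone using hblock
  exact ⟨blockwiseSL2 A, fun j => by rw [blockwiseSL2_apply, ofBlocks_idx2, hrow],
    fun j hj => blockwiseSL2_single_idx2 (hone j hj)⟩

lemma exists_isometry_map_eq_single_idx2 (i : Fin n) {t v : Fin (2 * n) → R}
    (htv : symplecticForm R n t v = 1) :
    ∃ g : symplecticForm R n →bᵢ symplecticForm R n, g v = Pi.single (idx2 n i) 1 := by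
  obtain ⟨g₁, hg₁, -⟩ := exists_isometry_idx2_eq_zero v
  obtain ⟨g₂, hg₂⟩ := exists_isometry_map_eq_of_orthogonal symplecticForm_isAlt
    (e := Pi.single (idx1 n i) 1) (f := Pi.single (idx2 n i) 1) (t := g₁ t) (v := g₁ v)
    (by simp [symplecticForm_single_idx1])
    (by rw [symplecticForm_single_idx1, hg₁]) (by rw [g₁.map_app, htv])
  exact ⟨g₂.comp g₁, hg₂⟩

lemma exists_isometry_map_eq_single_idx2_and_idx2_eq_zero (i : Fin n) {u v : Fin (2 * n) → R}
    (hspan : Submodule.span R (Set.range fun k => (u k, v k)) = ⊤) :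
    ∃ g : symplecticForm R n →bᵢ symplecticForm R n,
      g v = Pi.single (idx2 n i) 1 ∧ ∀ j, g u (idx2 n j) = 0 := by
  obtain ⟨t, -, htv⟩ := exists_symplecticForm_eq_of_span_eq_top hspan 0 1
  obtain ⟨s, hsu, hsv⟩ := exists_symplecticForm_eq_of_span_eq_top hspan 1 0
  obtain ⟨g₁, hg₁v⟩ := exists_isometry_map_eq_single_idx2 i htv
  obtain ⟨g₂, hg₂f, hg₂u⟩ := exists_isometry_fixing_orthogonal symplecticForm_isAlt
    (e := Pi.single (idx1 n i) 1) (f := Pi.single (idx2 n i) 1) (s := g₁ s) (u := g₁ u)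
    (by simp [symplecticForm_single_idx1]) (by rw [← hg₁v, g₁.map_app, hsv])
    (by rw [g₁.map_app, hsu])
  obtain ⟨g₃, hg₃u, hg₃f⟩ := exists_isometry_idx2_eq_zero (g₂ (g₁ u))
  rw [symplecticForm_single_idx1] at hg₂u
  exact ⟨g₃.comp (g₂.comp g₁), by simp [hg₁v, hg₂f, hg₃f i hg₂u], hg₃u⟩

end BlockwiseSL2

lemma exists_isometry_fixing_idx1_add_mul {R : Type*} [CommRing R] {n : ℕ} (i : Fin n)
    {u : Fin (2 * n) → R} (hu : ∀ j, u (idx2 n j) = 0) (c : Fin n → R) :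
    ∃ g : symplecticForm R n →bᵢ symplecticForm R n,
      g (Pi.single (idx2 n i) 1) = Pi.single (idx2 n i) 1 ∧ (∀ j, g u (idx2 n j) = 0) ∧
      ∀ j, j ≠ i → g u (idx1 n j) = u (idx1 n j) + u (idx1 n i) * c j := by
  let w : Fin (2 * n) → R := ofBlocks (Function.update c i 0) 0
  have hfw : symplecticForm R n (Pi.single (idx2 n i) 1) w = 0 := by
    rw [← symplecticForm_isAlt.neg_eq, symplecticForm_single_idx2]
    simp [w]
  have hwu : symplecticForm R n w u = 0 := by
    simp [symplecticForm_apply, omegaForm, omegaJ, hu, w]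
  obtain ⟨g, hgf, hgu⟩ := exists_isometry_fixing_map_eq_add_smul symplecticForm_isAlt hfw hwu
  refine ⟨g, hgf, fun j => by simp [hgu, hu, w], fun j hji => ?_⟩
  simp [hgu, symplecticForm_single_idx2, w, hji]

theorem normalize_blocks_reduced_general (n : ℕ) (i : Fin n) (u v : Fin (2 * n) → ℤ)
    (hpos : 0 < omegaForm n u v)
    (hgen : AddSubgroup.closure
      (Set.range fun k : Fin (2 * n) => ((u k, v k) : ℤ × ℤ)) = ⊤) :
    ∃ γ : Matrix (Fin (2 * n)) (Fin (2 * n)) ℤ,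
      IsSymplectic n γ ∧
      γ.mulVec u (idx1 n i) = omegaForm n u v ∧
      γ.mulVec u (idx2 n i) = 0 ∧
      γ.mulVec v (idx1 n i) = 0 ∧
      γ.mulVec v (idx2 n i) = 1 ∧
      ∀ j : Fin n, j ≠ i →
        γ.mulVec u (idx2 n j) = 0 ∧
        γ.mulVec v (idx1 n j) = 0 ∧
        γ.mulVec v (idx2 n j) = 0 ∧
        0 ≤ γ.mulVec u (idx1 n j) ∧
        γ.mulVec u (idx1 n j) < omegaForm n u v := by
  have hspan : Submodule.span ℤ (Set.range fun k => (u k, v k)) = ⊤ := by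
    rw [← Submodule.toAddSubgroup_inj, Submodule.span_int_eq_addSubgroupClosure, hgen]
    rfl
  obtain ⟨g₁, hg₁v, hg₁u⟩ := exists_isometry_map_eq_single_idx2_and_idx2_eq_zero i hspan
  obtain ⟨g₂, hg₂f, hg₂u, hg₂mod⟩ := exists_isometry_fixing_idx1_add_mul i hg₁u
    fun j => -(g₁ u (idx1 n j) / omegaForm n u v)
  have hv : g₂.comp g₁ v = Pi.single (idx2 n i) 1 := by simp [hg₁v, hg₂f]
  have hmod (j : Fin n) (hji : j ≠ i) :
      g₂.comp g₁ u (idx1 n j) = g₁ u (idx1 n j) % omegaForm n u v := by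
    simp [hg₂mod j hji, isometry_apply_idx1_of_map_eq_single hg₁v, Int.emod_def, sub_eq_add_neg]
  refine ⟨LinearMap.toMatrix' (g₂.comp g₁).toLinearMap, isSymplectic_toMatrix' _, ?_⟩
  simp only [LinearMap.toMatrix'_mulVec, LinearMap.BilinForm.Isometry.coe_toLinearMap, hv]
  refine ⟨isometry_apply_idx1_of_map_eq_single hv u, hg₂u i, by simp [idx1_ne_idx2], by simp,
    fun j hji => ?_⟩
  refine ⟨hg₂u j, by simp [idx1_ne_idx2], by simp [idx2_injective.eq_iff, hji], ?_⟩
  rw [hmod j hji]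
  exact ⟨Int.emod_nonneg _ hpos.ne', Int.emod_lt_of_pos _ hpos⟩

/-- For `n ≥ 3` and integer vectors `u, v ∈ ℤ^{2n}` with
`a₁ = ω(u, v) > 0` whose columns `(u_k, v_k)` generate `ℤ²`, there is
`γ ∈ Sp(2n, ℤ)` such that for `u' = γu, v' = γv`: the first block `M₁` equals
`[[a₁, 0], [0, 1]]` and for each `j ≥ 2` the `j`-th block is `[[a_j, 0], [0, 0]]`
with `0 ≤ a_j < a₁`. -/
theorem normalize_blocks_reduced (n : ℕ) (hn : 3 ≤ n)
    (u v : Fin (2 * n) → ℤ) (hpos : 0 < omegaForm n u v)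
    (hgen : AddSubgroup.closure
      (Set.range fun k : Fin (2 * n) => ((u k, v k) : ℤ × ℤ)) = ⊤) :
    ∃ γ : Matrix (Fin (2 * n)) (Fin (2 * n)) ℤ,
      IsSymplectic n γ ∧
      γ.mulVec u (idx1 n (⟨0, by omega⟩ : Fin n)) = omegaForm n u v ∧
      γ.mulVec u (idx2 n (⟨0, by omega⟩ : Fin n)) = 0 ∧
      γ.mulVec v (idx1 n (⟨0, by omega⟩ : Fin n)) = 0 ∧
      γ.mulVec v (idx2 n (⟨0, by omega⟩ : Fin n)) = 1 ∧
      ∀ j : Fin n, 1 ≤ j.val →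
        γ.mulVec u (idx2 n j) = 0 ∧
        γ.mulVec v (idx1 n j) = 0 ∧
        γ.mulVec v (idx2 n j) = 0 ∧
        0 ≤ γ.mulVec u (idx1 n j) ∧
        γ.mulVec u (idx1 n j) < omegaForm n u v := by
  obtain ⟨γ, hγ, hu1, hu2, hv1, hv2, hrest⟩ :=
    normalize_blocks_reduced_general n ⟨0, by omega⟩ u v hpos hgen
  exact ⟨γ, hγ, hu1, hu2, hv1, hv2, fun j hj => hrest j (Fin.ne_of_val_ne (Nat.ne_of_gt hj))⟩
end
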